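/- There exists a unique a_* > 0 with the following property: the solution f(·;a_*) of the profile equation with parameter a_* satisfies f(r;a_*) > 0 for all r ≥ 0, and there exists a constant c_* > 0 such that f(r;a_*) · r^{(N-1)/(p-1)} · e^{r/(p-1)} → c_* as r → ∞. -/

import Mathlib

/-!
Put `n = N - 1`, `σ = 1/(p-1) > 1` and `g = |f'|^{p-1}`.  A positive solution of the profile equation
is decreasing, so it is the same as a positive solution of the system `f' = -g^σ`,
`g' = f - (n/r + 1) g` (`Prof`, `prof_of_sol`).  With the weight `ρ = r^n e^r`, `w = ρ g` and
`s = ∫₀^r ρ`, the second equation reads `w' = ρ f`, and the required asymptotics say that `f ρ^σ`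
has a positive limit.  The condition `p > 2N/(N+1)` reads `n σ < n + 2`.

**Existence** is a shooting argument (`exists_fast`).  With the nonlinearity clamped, solutions exist
globally and depend continuously on `a = f(0)` (`tprof_exists`).  The values `a` for which `f`
becomes negative form an open set, which contains all large `a` (`Prof.not_of_large`; this is where
`n σ < n + 2` enters).  The values for which the orbit enters the set `0 < f < δ`, `g < δ`, `g^σ < f`
form an open set, which contains the small `a`.  That set of states is invariant
(`TProf.pos_of_mem_slow`), so the two sets of values are disjoint, and by connectedness some `a` is
in neither.  Its solution is positive with `f ≤ g^σ` eventually.  Then `w'/w ≤ g^{σ-1}`, which makes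
`w` bounded (`Prof.w_bdd_of_not_slow`), and l'Hôpital's rule gives the limit of `f ρ^σ`
(`Prof.fast_of_w_bdd`).

**Uniqueness** compares two profiles through the Pohozaev functional
`P = s f² - w f + (2/(σ+1)) s g^{σ+1}`, whose derivative is
`ρ g^{σ+1} ((σ+3)/(σ+1) - 2 s ρ'/ρ²)`.  As `s ρ'/ρ²` is increasing (`logDeriv_strictMono`) and `P`
tends to `0` at both ends of a fast decaying profile, `P > 0` (`Prof.poh_pos`).  For two such
profiles, `(w₂/w₁)^{σ+1} P₁ - P₂` has the derivative `(σ+1) (w₂/w₁)^σ (w₂/w₁)' P₁`.  If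
`f₁(0) < f₂(0)`, then `w₂/w₁` decreases, first near the origin and then, by the sign of this
combination, everywhere; so the combination decreases from nonpositive values, while its limit at
infinity is nonnegative (`Prof.not_initial_lt`).
-/

open Real Set Filter MeasureTheory

/-- `f` is a solution of the profile equation with parameter `a`:
`f` is C¹ on `[0,∞)` with derivative `f'`, the map `r ↦ |f'(r)|^{p-2} f'(r)` is C¹ on `[0,∞)`
with derivative `F'`, the ODE
`(|f'|^{p-2}f')'(r) + ((N-1)/r)(|f'|^{p-2}f')(r) + f(r) - |f'(r)|^{p-1} = 0` holds for `r > 0`,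
and `f 0 = a`, `f' 0 = 0`. -/
def IsProfileSol (N : ℕ) (p a : ℝ) (f f' F' : ℝ → ℝ) : Prop :=
  (∀ r ∈ Ici (0:ℝ), HasDerivWithinAt f (f' r) (Ici 0) r) ∧
  ContinuousOn f' (Ici 0) ∧
  (∀ r ∈ Ici (0:ℝ), HasDerivWithinAt (fun s => |f' s| ^ (p - 2) * f' s) (F' r) (Ici 0) r) ∧
  ContinuousOn F' (Ici 0) ∧
  (∀ r, 0 < r →
    F' r + (((N : ℝ) - 1) / r) * (|f' r| ^ (p - 2) * f' r) + f r - |f' r| ^ (p - 1) = 0) ∧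
  f 0 = a ∧ f' 0 = 0

/-- `g(r;a) = -|f'(r;a)|^{p-2} f'(r;a)`. -/
noncomputable def gFun (p : ℝ) (f' : ℝ → ℝ) (r : ℝ) : ℝ := -(|f' r| ^ (p - 2) * f' r)

/-- `ρ(r) = r^{N-1} e^r`. -/
noncomputable def rho (N : ℕ) (r : ℝ) : ℝ := r ^ (N - 1) * Real.exp r

/-- the derivative of `ρ`. -/
noncomputable def rho' (N : ℕ) (r : ℝ) : ℝ :=
  (((N : ℝ) - 1) * r ^ (N - 2) + r ^ (N - 1)) * Real.exp r

/-- `w(r;a) = ρ(r) g(r;a)`. -/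
noncomputable def wFun (N : ℕ) (p : ℝ) (f' : ℝ → ℝ) (r : ℝ) : ℝ := rho N r * gFun p f' r

/-- the derivative `w'(r;a) = ρ'(r) g(r;a) + ρ(r) g'(r;a)`, where `g' = -F'`. -/
noncomputable def wDeriv (N : ℕ) (p : ℝ) (f' F' : ℝ → ℝ) (r : ℝ) : ℝ :=
  rho' N r * gFun p f' r - rho N r * F' r

/-- The solution with parameter `a` is positive on `[0,∞)` and decays like
`c r^{-(N-1)/(p-1)} e^{-r/(p-1)}` as `r → ∞` for some `c > 0`. -/
def HasFastDecay (N : ℕ) (p a : ℝ) : Prop :=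
  ∃ f f' F' : ℝ → ℝ, IsProfileSol N p a f f' F' ∧
    (∀ r, 0 ≤ r → 0 < f r) ∧
    ∃ c, 0 < c ∧
      Filter.Tendsto (fun r => f r * r ^ (((N : ℝ) - 1) / (p - 1)) * Real.exp (r / (p - 1)))
        Filter.atTop (nhds c)

/-! ### The weight and its primitive -/

theorem le_of_deriv_nonpos {u u' : ℝ → ℝ} {a b : ℝ} (hab : a ≤ b)
    (hc : ContinuousOn u (Icc a b)) (hd : ∀ x ∈ Ioo a b, HasDerivAt u (u' x) x)
    (hn : ∀ x ∈ Ioo a b, u' x ≤ 0) : u b ≤ u a := by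
  refine antitoneOn_of_deriv_nonpos (convex_Icc a b) hc ?_ ?_ (left_mem_Icc.2 hab)
    (right_mem_Icc.2 hab) hab
  · rw [interior_Icc]
    exact fun x hx => (hd x hx).differentiableAt.differentiableWithinAt
  · rw [interior_Icc]
    intro x hx
    rw [(hd x hx).deriv]
    exact hn x hx

theorem le_of_deriv_nonneg {u u' : ℝ → ℝ} {a b : ℝ} (hab : a ≤ b)
    (hc : ContinuousOn u (Icc a b)) (hd : ∀ x ∈ Ioo a b, HasDerivAt u (u' x) x)
    (hn : ∀ x ∈ Ioo a b, 0 ≤ u' x) : u a ≤ u b := by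
  have := le_of_deriv_nonpos (u := fun x => - u x) (u' := fun x => - u' x) hab hc.neg
    (fun x hx => (hd x hx).neg) (fun x hx => by linarith [hn x hx])
  linarith

theorem lt_of_deriv_neg {u u' : ℝ → ℝ} {a b : ℝ} (hab : a < b)
    (hc : ContinuousOn u (Icc a b)) (hd : ∀ x ∈ Ioo a b, HasDerivAt u (u' x) x)
    (hn : ∀ x ∈ Ioo a b, u' x < 0) : u b < u a := by
  refine strictAntiOn_of_deriv_neg (convex_Icc a b) hc ?_ (left_mem_Icc.2 hab.le)
    (right_mem_Icc.2 hab.le) hab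
  rw [interior_Icc]
  intro x hx
  rw [(hd x hx).deriv]
  exact hn x hx

theorem lt_of_deriv_pos {u u' : ℝ → ℝ} {a b : ℝ} (hab : a < b)
    (hc : ContinuousOn u (Icc a b)) (hd : ∀ x ∈ Ioo a b, HasDerivAt u (u' x) x)
    (hn : ∀ x ∈ Ioo a b, 0 < u' x) : u a < u b := by
  have := lt_of_deriv_neg (u := fun x => - u x) (u' := fun x => - u' x) hab hc.neg
    (fun x hx => (hd x hx).neg) (fun x hx => by linarith [hn x hx])
  linarith

/-- The weight `ρ(r) = r^n e^r`, where `n = N - 1`. -/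
noncomputable def dens (n : ℕ) (r : ℝ) : ℝ := r ^ n * exp r

/-- The primitive `s(r) = ∫₀^r ρ` of the weight. -/
noncomputable def vol (n : ℕ) (r : ℝ) : ℝ := ∫ t in (0:ℝ)..r, dens n t

theorem dens_cont (n : ℕ) : Continuous (dens n) := by unfold dens; fun_prop

theorem dens_pos (n : ℕ) {r : ℝ} (hr : 0 < r) : 0 < dens n r := by unfold dens; positivity

theorem dens_nonneg (n : ℕ) {r : ℝ} (hr : 0 ≤ r) : 0 ≤ dens n r := by unfold dens; positivity

theorem dens_deriv (n : ℕ) {r : ℝ} (hr : 0 < r) :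
    HasDerivAt (dens n) (dens n r * (n / r + 1)) r := by
  have h := (hasDerivAt_pow n r).mul (Real.hasDerivAt_exp r)
  refine h.congr_deriv ?_
  unfold dens
  rcases n with _ | n
  · simp
  · have : r ≠ 0 := hr.ne'
    simp only [Nat.add_sub_cancel]
    field_simp
    ring

theorem exp_le_dens (n : ℕ) {r : ℝ} (hr : 1 ≤ r) : exp r ≤ dens n r := by
  unfold dens
  have := one_le_pow₀ hr (n := n)
  nlinarith [exp_pos r]

theorem dens_atTop (n : ℕ) : Tendsto (dens n) atTop atTop :=
  tendsto_atTop_mono' _ ((eventually_ge_atTop 1).mono fun _ hr => exp_le_dens n hr)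
    tendsto_exp_atTop

theorem vol_deriv (n : ℕ) (r : ℝ) : HasDerivAt (vol n) (dens n r) r :=
  intervalIntegral.integral_hasDerivAt_right ((dens_cont n).intervalIntegrable _ _)
    (dens_cont n).stronglyMeasurable.stronglyMeasurableAtFilter (dens_cont n).continuousAt

theorem vol_cont (n : ℕ) : Continuous (vol n) :=
  continuous_iff_continuousAt.2 fun r => (vol_deriv n r).continuousAt

theorem vol_zero (n : ℕ) : vol n 0 = 0 := by simp [vol]

theorem vol_pos (n : ℕ) {r : ℝ} (hr : 0 < r) : 0 < vol n r := by
  rw [← vol_zero n]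
  exact lt_of_deriv_pos hr (vol_cont n).continuousOn (fun x _ => vol_deriv n x)
    fun x hx => dens_pos n hx.1

theorem vol_nonneg (n : ℕ) {r : ℝ} (hr : 0 ≤ r) : 0 ≤ vol n r := by
  rcases hr.eq_or_lt with rfl | h
  · rw [vol_zero]
  · exact (vol_pos n h).le

theorem vol_le_dens (n : ℕ) {r : ℝ} (hr : 0 ≤ r) : vol n r ≤ dens n r := by
  have h := le_of_deriv_nonneg (u := fun x => dens n x - vol n x) hr
    ((dens_cont n).sub (vol_cont n)).continuousOn
    (fun x hx => (dens_deriv n hx.1).sub (vol_deriv n x)) (fun x hx => by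
      have h1 := dens_pos n hx.1
      have h2 : 0 ≤ (n : ℝ) / x := div_nonneg (by positivity) hx.1.le
      nlinarith)
  have h0 := dens_nonneg n le_rfl
  simp only [vol_zero] at h
  linarith

/-- The logarithmic derivative `s ρ' / ρ²` of the weight in the variable `s = ∫₀^r ρ` is strictly
increasing.  This makes the derivative of the Pohozaev functional change sign only once. -/
theorem logDeriv_strictMono (n : ℕ) (hn : 1 ≤ n) :
    StrictMonoOn (fun r => vol n r * (n / r + 1) / dens n r) (Ioi 0) := by
  have hn' : (1:ℝ) ≤ n := by exact_mod_cast hn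
  -- the sign of the derivative is that of `H - s`, where `H = ρ r (n + r) / ((n + r)² + n)`
  have key : ∀ r : ℝ, 0 < r → vol n r < dens n r * (r * (n + r) / ((n + r) ^ 2 + n)) := by
    intro r hr
    have hD : ∀ x : ℝ, (n + x) ^ 2 + n ≠ (0:ℝ) := fun x => by positivity
    have h := lt_of_deriv_pos
      (u := fun x => dens n x * (x * (n + x) / ((n + x) ^ 2 + n)) - vol n x)
      (u' := fun x => dens n x * (2 * x * n / ((n + x) ^ 2 + n) ^ 2)) hr
      (by
        refine ContinuousOn.sub (ContinuousOn.mul (dens_cont n).continuousOn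
          (ContinuousOn.div (by fun_prop) (by fun_prop) fun x _ => hD x))
          (vol_cont n).continuousOn)
      (fun x hx => by
        have hx0 : x ≠ 0 := hx.1.ne'
        have h1 : HasDerivAt (fun y : ℝ => y * (n + y)) (n + 2 * x) x := by
          refine ((hasDerivAt_id x).mul ((hasDerivAt_id x).const_add (n : ℝ))).congr_deriv ?_
          simp; ring
        have h2 : HasDerivAt (fun y : ℝ => (n + y) ^ 2 + (n : ℝ)) (2 * (n + x)) x := by
          refine ((((hasDerivAt_id x).const_add (n : ℝ)).pow 2).add_const (n : ℝ)).congr_deriv ?_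
          simp
        refine (((dens_deriv n hx.1).mul (h1.div h2 (hD x))).sub (vol_deriv n x)).congr_deriv ?_
        have := hD x
        field_simp
        simp only [Pi.div_apply]
        field_simp
        ring)
      (fun x hx => by
        have := dens_pos n hx.1
        have := hx.1
        positivity)
    simp only [vol_zero] at h
    have h0 : dens n 0 * (0 * (n + 0) / ((n + 0) ^ 2 + n)) = (0:ℝ) := by simp
    linarith
  refine strictMonoOn_of_deriv_pos (convex_Ioi 0) ?_ ?_
  · exact ContinuousOn.div (ContinuousOn.mul (vol_cont n).continuousOn
      (ContinuousOn.add (ContinuousOn.div continuousOn_const continuousOn_id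
        fun x hx => (ne_of_gt hx)) continuousOn_const)) (dens_cont n).continuousOn
      fun x hx => (dens_pos n hx).ne'
  · rw [interior_Ioi]
    intro x hx
    have hx : 0 < x := hx
    have hx0 : x ≠ 0 := hx.ne'
    have hd := dens_pos n hx
    have h1 : HasDerivAt (fun r : ℝ => (n : ℝ) / r + 1) (-(n / x ^ 2)) x := by
      refine (((hasDerivAt_inv hx0).const_mul (n : ℝ)).add_const (1:ℝ)).congr_deriv ?_
      field_simp
    have h2 := ((vol_deriv n x).mul h1).div (dens_deriv n hx) hd.ne'
    have h3 : deriv (fun r => vol n r * (n / r + 1) / dens n r) x = _ := h2.deriv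
    rw [h3]
    have hk := key x hx
    rw [mul_div_assoc', lt_div_iff₀ (by positivity)] at hk
    have : 0 < (dens n x * (x * (n + x)) - vol n x * ((n + x) ^ 2 + n)) / (x ^ 2 * dens n x) :=
      div_pos (by linarith) (by positivity)
    refine this.trans_eq ?_
    simp only [Pi.mul_apply]
    field_simp
    ring

/-! ### The integral operator -/

/-- The weighted average `∫₀¹ τ^n e^{-r(1-τ)} f(rτ) dτ`, which for `r > 0` equals
`(r ρ(r))⁻¹ ∫₀^r ρ f`.  Written this way it is visibly continuous up to `r = 0`. -/
noncomputable def avg (n : ℕ) (f : ℝ → ℝ) (r : ℝ) : ℝ :=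
  ∫ τ in (0:ℝ)..1, τ ^ n * exp (-(r * (1 - τ))) * f (r * τ)

theorem avg_cont (n : ℕ) {f : ℝ → ℝ} (hf : Continuous f) : Continuous (avg n f) := by
  unfold avg
  apply intervalIntegral.continuous_parametric_intervalIntegral_of_continuous'
  fun_prop

theorem avg_zero (n : ℕ) (f : ℝ → ℝ) : avg n f 0 = f 0 / (n + 1) := by
  simp [avg]
  ring

theorem dens_mul_avg (n : ℕ) (f : ℝ → ℝ) (r : ℝ) :
    dens n r * (r * avg n f r) = ∫ t in (0:ℝ)..r, dens n t * f t := by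
  have h := intervalIntegral.mul_integral_comp_mul_left (a := 0) (b := 1)
    (f := fun t => dens n t * f t) (c := r)
  rw [mul_zero, mul_one] at h
  rw [← h, mul_left_comm]
  congr 1
  rw [avg, ← intervalIntegral.integral_const_mul]
  congr 1
  funext τ
  have : exp r * exp (-(r * (1 - τ))) = exp (r * τ) := by rw [← exp_add]; ring_nf
  simp only [dens]
  rw [← this]
  ring

theorem integral_exp_mul {K r : ℝ} (hK : 0 < K) :
    ∫ τ in (0:ℝ)..r, exp (K * τ) = (exp (K * r) - 1) / K := by
  have h := intervalIntegral.integral_eq_sub_of_hasDerivAt (a := 0) (b := r)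
    (f := fun τ => exp (K * τ) / K) (f' := fun τ => exp (K * τ)) (fun x _ => by
      refine (((hasDerivAt_id x).const_mul K).exp.div_const K).congr_deriv ?_
      simp; field_simp) (by apply Continuous.intervalIntegrable; fun_prop)
  rw [h]
  simp
  ring

/-- `f ↦ r * avg n f r` gains a factor `1/K` in the sup-norm weighted by `e^{-Kt}`. -/
theorem avg_diff_le (n : ℕ) {f₁ f₂ : ℝ → ℝ} (h₁ : Continuous f₁) (h₂ : Continuous f₂)
    {K D : ℝ} (hK : 0 < K) (hD : ∀ t, |f₁ t - f₂ t| ≤ exp (K * t) * D) {r : ℝ} (hr : 0 ≤ r) :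
    |r * avg n f₁ r - r * avg n f₂ r| ≤ exp (K * r) * D / K := by
  have hD0 : 0 ≤ D := by
    have := (abs_nonneg _).trans (hD 0)
    simpa using this
  have e : avg n f₁ r - avg n f₂ r
      = ∫ τ in (0:ℝ)..1, τ ^ n * exp (-(r * (1 - τ))) * (f₁ (r * τ) - f₂ (r * τ)) := by
    unfold avg
    rw [← intervalIntegral.integral_sub]
    · congr 1; funext τ; ring
    · apply Continuous.intervalIntegrable; fun_prop
    · apply Continuous.intervalIntegrable; fun_prop
  have b : |avg n f₁ r - avg n f₂ r| ≤ ∫ τ in (0:ℝ)..1, exp (K * (r * τ)) * D := by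
    rw [e, ← Real.norm_eq_abs]
    apply intervalIntegral.norm_integral_le_of_norm_le zero_le_one
    · refine Eventually.of_forall fun τ hτ => ?_
      have h0 : 0 ≤ τ := hτ.1.le
      have h1 : τ ^ n ≤ 1 := pow_le_one₀ h0 hτ.2
      have h2 : exp (-(r * (1 - τ))) ≤ 1 := by
        rw [exp_le_one_iff]; nlinarith [hτ.2]
      have h3 : τ ^ n * exp (-(r * (1 - τ))) ≤ 1 := mul_le_one₀ h1 (exp_pos _).le h2
      rw [Real.norm_eq_abs, abs_mul, abs_of_nonneg (by positivity)]
      calc _ ≤ 1 * |f₁ (r * τ) - f₂ (r * τ)| := by gcongr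
        _ ≤ _ := by rw [one_mul]; exact hD _
    · apply Continuous.intervalIntegrable; fun_prop
  have c : r * ∫ τ in (0:ℝ)..1, exp (K * (r * τ)) * D = (exp (K * r) - 1) / K * D := by
    rw [intervalIntegral.mul_integral_comp_mul_left (f := fun t => exp (K * t) * D), mul_zero,
      mul_one, intervalIntegral.integral_mul_const, integral_exp_mul hK]
  rw [← mul_sub, abs_mul, abs_of_nonneg hr]
  calc _ ≤ r * ∫ τ in (0:ℝ)..1, exp (K * (r * τ)) * D := by gcongr
    _ = (exp (K * r) - 1) / K * D := c
    _ ≤ exp (K * r) / K * D := by gcongr; linarith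
    _ = _ := by ring

/-- The integral operator whose fixed points (on `[0,∞)`) are the solutions with
nonlinearity `φ`. -/
noncomputable def intOp (n : ℕ) (φ : ℝ → ℝ) (a : ℝ) (f : ℝ → ℝ) (r : ℝ) : ℝ :=
  a - ∫ s in (0:ℝ)..r, φ (s * avg n f s)

theorem intOp_deriv (n : ℕ) {φ : ℝ → ℝ} (hφ : Continuous φ) (a : ℝ) {f : ℝ → ℝ}
    (hf : Continuous f) (r : ℝ) :
    HasDerivAt (intOp n φ a f) (-φ (r * avg n f r)) r := by
  have hc : Continuous fun s => φ (s * avg n f s) := by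
    have := avg_cont n hf
    fun_prop
  exact (intervalIntegral.integral_hasDerivAt_right (hc.intervalIntegrable _ _)
    hc.stronglyMeasurable.stronglyMeasurableAtFilter hc.continuousAt).const_sub a

/-- In the sup-norm weighted by `e^{-Kt}`, the operator `intOp` has Lipschitz constant
`L / K²`. -/
theorem intOp_diff_le (n : ℕ) {φ : ℝ → ℝ} {L : ℝ}
    (hφc : Continuous φ) (hφ : ∀ x y, |φ x - φ y| ≤ L * |x - y|) (hL : 0 ≤ L) (a : ℝ)
    {f₁ f₂ : ℝ → ℝ} (h₁ : Continuous f₁) (h₂ : Continuous f₂)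
    {K D : ℝ} (hK : 0 < K) (hD : ∀ t, |f₁ t - f₂ t| ≤ exp (K * t) * D) {r : ℝ} (hr : 0 ≤ r) :
    |intOp n φ a f₁ r - intOp n φ a f₂ r| ≤ L / K ^ 2 * (exp (K * r) * D) := by
  have hD0 : 0 ≤ D := by
    have := (abs_nonneg _).trans (hD 0)
    simpa using this
  have c1 := avg_cont n h₁
  have c2 := avg_cont n h₂
  have e : intOp n φ a f₁ r - intOp n φ a f₂ r
      = ∫ s in (0:ℝ)..r, (φ (s * avg n f₂ s) - φ (s * avg n f₁ s)) := by
    unfold intOp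
    rw [intervalIntegral.integral_sub]
    · ring
    · apply Continuous.intervalIntegrable; fun_prop
    · apply Continuous.intervalIntegrable; fun_prop
  rw [e, ← Real.norm_eq_abs]
  calc _ ≤ ∫ s in (0:ℝ)..r, exp (K * s) * (L * D / K) := by
        apply intervalIntegral.norm_integral_le_of_norm_le hr
        · refine Eventually.of_forall fun s hs => ?_
          rw [Real.norm_eq_abs, abs_sub_comm]
          refine (hφ _ _).trans ?_
          calc _ ≤ L * (exp (K * s) * D / K) := by
                gcongr; exact avg_diff_le n h₁ h₂ hK hD hs.1.le
            _ = _ := by ring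
        · apply Continuous.intervalIntegrable; fun_prop
    _ = (exp (K * r) - 1) / K * (L * D / K) := by
        rw [intervalIntegral.integral_mul_const, integral_exp_mul hK]
    _ ≤ exp (K * r) / K * (L * D / K) := by gcongr; linarith
    _ = _ := by field_simp

open BoundedContinuousFunction in
/-- Global existence, by contraction in a sup-norm weighted by `e^{-Kr}`, for the initial value
problem with a bounded Lipschitz nonlinearity `φ`, with locally uniform Lipschitz dependence on
the initial value. -/
theorem exists_family (n : ℕ) {φ : ℝ → ℝ} {L B : ℝ}
    (hφ : ∀ x y, |φ x - φ y| ≤ L * |x - y|) (hL : 0 ≤ L) (hB : ∀ x, |φ x| ≤ B) :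
    ∃ (f : ℝ → ℝ → ℝ) (K : ℝ), 0 < K ∧ (∀ a, Continuous (f a)) ∧
      (∀ a, ∀ r, 0 ≤ r → f a r = intOp n φ a (f a) r) ∧
      ∀ a b t, |f a t - f b t| ≤ exp (K * t) * (2 * |a - b|) := by
  have hφc : Continuous φ := by
    refine (LipschitzWith.of_dist_le_mul (K := ⟨L, hL⟩) fun x y => ?_).continuous
    rw [Real.dist_eq, Real.dist_eq]; exact hφ x y
  have hB0 : 0 ≤ B := (abs_nonneg _).trans (hB 0)
  -- with this `K` the Lipschitz constant `L / K²` is at most `1/2`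
  set K : ℝ := 1 + 2 * L with hKdef
  have hK : 0 < K := by positivity
  have hLK : L / K ^ 2 ≤ 1 / 2 := by
    rw [div_le_div_iff₀ (by positivity) (by positivity)]; nlinarith
  have hlift : ∀ u : ℝ →ᵇ ℝ, Continuous fun t => exp (K * t) * u t := fun u => by
    have := u.continuous; fun_prop
  have hbd : ∀ (a : ℝ) (u : ℝ →ᵇ ℝ) (r : ℝ),
      ‖exp (-(K * max r 0)) * intOp n φ a (fun t => exp (K * t) * u t) (max r 0)‖
        ≤ |a| + B := by
    intro a u r
    set s := max r 0
    have hs : 0 ≤ s := le_max_right _ _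
    have h1 : |intOp n φ a (fun t => exp (K * t) * u t) s| ≤ |a| + B * s := by
      unfold intOp
      refine (abs_sub _ _).trans ?_
      gcongr
      have := intervalIntegral.norm_integral_le_of_norm_le_const (a := 0) (b := s) (C := B)
        (f := fun x => φ (x * avg n (fun t => exp (K * t) * u t) x)) (fun x _ => hB _)
      simpa [abs_of_nonneg hs] using this
    have h2 : exp (-(K * s)) ≤ 1 := by rw [exp_le_one_iff]; nlinarith
    have h3 : exp (-(K * s)) * s ≤ 1 := by
      rw [exp_neg, inv_mul_le_one₀ (exp_pos _)]
      nlinarith [add_one_le_exp (K * s)]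
    rw [norm_mul, Real.norm_eq_abs, Real.norm_eq_abs, abs_of_pos (exp_pos _)]
    calc _ ≤ exp (-(K * s)) * (|a| + B * s) := by gcongr
      _ = exp (-(K * s)) * |a| + B * (exp (-(K * s)) * s) := by ring
      _ ≤ 1 * |a| + B * 1 := by gcongr
      _ = _ := by ring
  -- bounded functions `u` encode candidates `f t = e^{Kt} u t`, and `max r 0` extends the
  -- operator, which is only contracting for `r ≥ 0`, to the whole line
  let T : ℝ → (ℝ →ᵇ ℝ) → (ℝ →ᵇ ℝ) := fun a u =>
    BoundedContinuousFunction.ofNormedAddCommGroup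
      (fun r => exp (-(K * max r 0)) * intOp n φ a (fun t => exp (K * t) * u t) (max r 0))
      (by
        have : Continuous (intOp n φ a (fun t => exp (K * t) * u t)) :=
          continuous_iff_continuousAt.2 fun r => (intOp_deriv n hφc a (hlift u) r).continuousAt
        fun_prop) (|a| + B) (hbd a u)
  have hT : ∀ a u r, T a u r
      = exp (-(K * max r 0)) * intOp n φ a (fun t => exp (K * t) * u t) (max r 0) :=
    fun a u r => rfl
  have hdiff : ∀ (u v : ℝ →ᵇ ℝ) t,
      |exp (K * t) * u t - exp (K * t) * v t| ≤ exp (K * t) * dist u v := by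
    intro u v t
    rw [← mul_sub, abs_mul, abs_of_pos (exp_pos _)]
    gcongr
    rw [← Real.dist_eq]
    exact BoundedContinuousFunction.dist_coe_le_dist t
  have hcontr : ∀ a, ContractingWith (1 / 2) (T a) := by
    intro a
    refine ⟨by rw [← NNReal.coe_lt_coe]; norm_num, LipschitzWith.of_dist_le_mul fun u v => ?_⟩
    have h12 : ((1 / 2 : NNReal) : ℝ) = 1 / 2 := by norm_num
    rw [h12]
    refine (BoundedContinuousFunction.dist_le (by positivity)).2 fun r => ?_
    rw [Real.dist_eq, hT, hT, ← mul_sub, abs_mul, abs_of_pos (exp_pos _)]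
    set s := max r 0
    have hs : 0 ≤ s := le_max_right _ _
    calc _ ≤ exp (-(K * s)) * (L / K ^ 2 * (exp (K * s) * dist u v)) := by
          gcongr
          exact intOp_diff_le n hφc hφ hL a (hlift u) (hlift v) hK (hdiff u v) hs
      _ = L / K ^ 2 * dist u v := by
          rw [exp_neg]; field_simp
      _ ≤ _ := by gcongr
  have : Nonempty (ℝ →ᵇ ℝ) := ⟨0⟩
  let U : ℝ → (ℝ →ᵇ ℝ) := fun a => (hcontr a).fixedPoint (T a)
  have hU : ∀ a, T a (U a) = U a := fun a => (hcontr a).fixedPoint_isFixedPt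
  have hdist : ∀ a b, dist (U a) (U b) ≤ 2 * |a - b| := by
    intro a b
    have h := (hcontr a).fixedPoint_lipschitz_in_map (hcontr b) (C := |a - b|) fun z => by
      refine (BoundedContinuousFunction.dist_le (by positivity)).2 fun r => ?_
      rw [Real.dist_eq, hT, hT, ← mul_sub, abs_mul, abs_of_pos (exp_pos _)]
      have : exp (-(K * max r 0)) ≤ 1 := by
        rw [exp_le_one_iff]
        have := le_max_right r 0
        nlinarith
      have e : ∀ (x y z : ℝ), x - z - (y - z) = x - y := fun x y z => by ring
      simp only [intOp, e]
      exact mul_le_of_le_one_left (abs_nonneg _) this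
    refine h.trans_eq ?_
    norm_num
    ring
  refine ⟨fun a t => exp (K * t) * U a t, K, hK, fun a => hlift _, fun a r hr => ?_,
    fun a b t => (hdiff _ _ t).trans ?_⟩
  · have := congrArg (fun u : ℝ →ᵇ ℝ => u r) (hU a)
    simp only [hT, max_eq_left hr] at this
    change exp (K * r) * U a r = intOp n φ a (fun t => exp (K * t) * U a t) r
    rw [← this, ← mul_assoc, ← exp_add]
    simp
  · gcongr
    exact hdist a b

/-! ### Positive profiles and truncated solutions -/

/-- A positive profile: `f` solves the profile equation with `f 0 = a`, written as the first
order system for `f` and `g = |f'|^{p-1}`, where `σ = 1/(p-1)` and `n = N - 1`, and both `f`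
and `g` are positive on `(0,∞)`. -/
structure Prof (n : ℕ) (σ a : ℝ) (f g : ℝ → ℝ) : Prop where
  contf : ContinuousOn f (Ici 0)
  contg : ContinuousOn g (Ici 0)
  f0 : f 0 = a
  g0 : g 0 = 0
  df : ∀ r, 0 < r → HasDerivAt f (-(g r ^ σ)) r
  dg : ∀ r, 0 < r → HasDerivAt g (f r - (n / r + 1) * g r) r
  fpos : ∀ r, 0 ≤ r → 0 < f r
  gpos : ∀ r, 0 < r → 0 < g r

/-- The nonlinearity `x ↦ x^σ` with its argument clamped to `[0, M]`; this makes it bounded and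
Lipschitz without changing any orbit that keeps `0 ≤ g ≤ M`. -/
noncomputable def trunc (σ M x : ℝ) : ℝ := (min (max x 0) M) ^ σ

/-- A solution of the system with the nonlinearity truncated at height `M`; no sign is
prescribed.  The last field records the behaviour of `g` at the origin. -/
structure TProf (n : ℕ) (σ M a : ℝ) (f g : ℝ → ℝ) : Prop where
  contf : Continuous f
  contg : Continuous g
  f0 : f 0 = a
  g0 : g 0 = 0
  df : ∀ r, 0 < r → HasDerivAt f (-(trunc σ M (g r))) r
  dg : ∀ r, 0 < r → HasDerivAt g (f r - (n / r + 1) * g r) r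
  gI : ∃ I : ℝ → ℝ, Continuous I ∧ I 0 = a / (n + 1) ∧ ∀ r, g r = r * I r

theorem trunc_arg {M : ℝ} (hM : 0 ≤ M) (x : ℝ) : min (max x 0) M ∈ Icc 0 M :=
  ⟨le_min (le_max_right _ _) hM, min_le_right _ _⟩

theorem trunc_nonneg {σ M : ℝ} (hM : 0 ≤ M) (x : ℝ) : 0 ≤ trunc σ M x :=
  rpow_nonneg (trunc_arg hM x).1 _

theorem trunc_eq {σ M x : ℝ} (h0 : 0 ≤ x) (hM : x ≤ M) : trunc σ M x = x ^ σ := by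
  rw [trunc, max_eq_left h0, min_eq_left hM]

theorem trunc_lip {σ M : ℝ} (hσ : 1 < σ) (hM : 0 ≤ M) (x y : ℝ) :
    |trunc σ M x - trunc σ M y| ≤ σ * M ^ (σ - 1) * |x - y| := by
  have h := (convex_Icc (0:ℝ) M).norm_image_sub_le_of_norm_hasDerivWithin_le
    (f := fun x => x ^ σ) (f' := fun x => σ * x ^ (σ - 1)) (C := σ * M ^ (σ - 1))
    (fun x _ => (Real.hasDerivAt_rpow_const (Or.inr hσ.le)).hasDerivWithinAt)
    (fun x hx => by
      have h1 := rpow_nonneg hx.1 (σ - 1)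
      rw [Real.norm_eq_abs, abs_of_nonneg (by positivity)]
      gcongr
      · exact hx.1
      · exact hx.2)
    (trunc_arg hM y) (trunc_arg hM x)
  refine h.trans ?_
  have h1 := rpow_nonneg hM (σ - 1)
  gcongr
  refine (abs_min_sub_min_le_max _ _ _ _).trans ?_
  rw [sub_self, abs_zero, max_eq_left (abs_nonneg _)]
  refine (abs_max_sub_max_le_max _ _ _ _).trans ?_
  rw [sub_self, abs_zero, max_eq_left (abs_nonneg _)]

/-- The solutions of the truncated problems form a family depending continuously on the initial
value. -/
theorem tprof_exists (n : ℕ) {σ M : ℝ} (hσ : 1 < σ) (hM : 0 ≤ M) :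
    ∃ f g : ℝ → ℝ → ℝ, (∀ a, TProf n σ M a (f a) (g a)) ∧
      ∀ r, 0 ≤ r → Continuous (fun a => f a r) ∧ Continuous (fun a => g a r) := by
  have h1 := rpow_nonneg hM (σ - 1)
  obtain ⟨f, K, hK, hfc, hfix, hlip⟩ := exists_family n (φ := trunc σ M) (trunc_lip hσ hM)
    (by positivity) (B := M ^ σ) (fun x => by
      rw [abs_of_nonneg (trunc_nonneg hM x)]
      exact rpow_le_rpow (trunc_arg hM x).1 (trunc_arg hM x).2 (by linarith))
  have hφc : Continuous (trunc σ M) := by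
    unfold trunc
    exact Continuous.rpow_const (by fun_prop) fun x => Or.inr (by linarith)
  have hcont : ∀ u : ℝ → ℝ, (∃ C, ∀ a b, |u a - u b| ≤ C * |a - b|) → Continuous u := by
    rintro u ⟨C, hC⟩
    have hC0 : 0 ≤ C := by
      have := (abs_nonneg _).trans (hC 1 0)
      simpa using this
    refine (LipschitzWith.of_dist_le_mul (K := ⟨C, hC0⟩) fun x y => ?_).continuous
    rw [Real.dist_eq, Real.dist_eq]; exact hC x y
  refine ⟨f, fun a r => r * avg n (f a) r, fun a => ?_, fun r hr => ⟨hcont _ ⟨_, fun a b =>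
    (hlip a b r).trans_eq (by rw [← mul_assoc])⟩, hcont _ ⟨exp (K * r) * 2 / K, fun a b => ?_⟩⟩⟩
  · have hcg : Continuous fun r => r * avg n (f a) r := continuous_id.mul (avg_cont n (hfc a))
    have hf0 : f a 0 = a := by rw [hfix a 0 le_rfl]; simp [intOp]
    refine ⟨hfc a, hcg, hf0, by simp, fun r hr => ?_, fun r hr => ?_,
      ⟨avg n (f a), avg_cont n (hfc a), by rw [avg_zero, hf0], fun r => rfl⟩⟩
    · refine (intOp_deriv n hφc a (hfc a) r).congr_of_eventuallyEq ?_
      filter_upwards [eventually_gt_nhds hr] with x hx using hfix a x hx.le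
    · have hd := dens_pos n hr
      have hc : Continuous fun t => dens n t * f a t := (dens_cont n).mul (hfc a)
      have hw : HasDerivAt (fun x => ∫ t in (0:ℝ)..x, dens n t * f a t) (dens n r * f a r) r :=
        intervalIntegral.integral_hasDerivAt_right (hc.intervalIntegrable _ _)
          hc.stronglyMeasurable.stronglyMeasurableAtFilter hc.continuousAt
      have := hw.div (dens_deriv n hr) hd.ne'
      refine (this.congr_of_eventuallyEq ?_).congr_deriv ?_
      · filter_upwards [eventually_gt_nhds hr] with x hx
        have := dens_pos n hx
        simp only [Pi.div_apply]
        rw [← dens_mul_avg]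
        field_simp
      · rw [← dens_mul_avg]
        field_simp
  · refine (avg_diff_le n (hfc a) (hfc b) hK (hlip a b) hr).trans_eq ?_
    ring

namespace TProf

variable {n : ℕ} {σ M a : ℝ} {f g : ℝ → ℝ}

theorem dw (h : TProf n σ M a f g) {r : ℝ} (hr : 0 < r) :
    HasDerivAt (fun x => dens n x * g x) (dens n r * f r) r :=
  ((dens_deriv n hr).mul (h.dg r hr)).congr_deriv (by ring)

theorem contw (h : TProf n σ M a f g) : Continuous (fun x => dens n x * g x) :=
  (dens_cont n).mul h.contg

theorem anti (h : TProf n σ M a f g) (hM : 0 ≤ M) {x y : ℝ} (hx : 0 ≤ x) (hxy : x ≤ y) :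
    f y ≤ f x :=
  le_of_deriv_nonpos hxy h.contf.continuousOn (fun t ht => h.df t (hx.trans_lt ht.1))
    fun _ _ => neg_nonpos.2 (trunc_nonneg hM _)

/-- Since `w ≤ a s ≤ a ρ`, the truncation at `M ≥ a` is never active. -/
theorem g_le (h : TProf n σ M a f g) (hM : 0 ≤ M) (ha0 : 0 ≤ a) (ha : a ≤ M) {r : ℝ}
    (hr : 0 < r) : g r ≤ M := by
  have hd := dens_pos n hr
  have h1 := le_of_deriv_nonneg (u := fun x => a * vol n x - dens n x * g x) hr.le
    (((vol_cont n).const_mul a).sub h.contw).continuousOn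
    (fun x hx => ((vol_deriv n x).const_mul a).sub (h.dw hx.1)) (fun x hx => by
      have := h.anti hM le_rfl hx.1.le
      rw [h.f0] at this
      have := dens_pos n hx.1
      nlinarith)
  simp only [vol_zero, h.g0] at h1
  have h2 := vol_le_dens n hr.le
  have h3 : dens n r * g r ≤ dens n r * M := by nlinarith
  exact le_of_mul_le_mul_left h3 hd

/-- As long as `f` stays nonnegative, the flux is positive. -/
theorem g_pos (h : TProf n σ M a f g) (hM : 0 ≤ M) (ha : 0 < a) {r : ℝ}
    (hr : 0 < r) (hf : 0 ≤ f r) : 0 < g r := by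
  have hd := dens_pos n hr
  -- near the origin `f > 0`, so that `w = ρ g` becomes positive; afterwards it cannot decrease
  obtain ⟨ε, hε, hεr, hfε⟩ : ∃ ε, 0 < ε ∧ ε < r ∧ 0 < f ε := by
    have h1 : ∀ᶠ x in nhdsWithin (0:ℝ) (Ioi 0), 0 < f x :=
      (h.contf.continuousAt.eventually (lt_mem_nhds (by rw [h.f0]; exact ha))).filter_mono
        nhdsWithin_le_nhds
    obtain ⟨ε, h2, h3⟩ := (h1.and (Ioo_mem_nhdsGT hr)).exists
    exact ⟨ε, h3.1, h3.2, h2⟩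
  have h1 := lt_of_deriv_pos (u := fun x => dens n x * g x) hε h.contw.continuousOn
    (fun x hx => h.dw hx.1) (fun x hx => mul_pos (dens_pos n hx.1)
      (hfε.trans_le (h.anti hM hx.1.le hx.2.le)))
  have h2 := le_of_deriv_nonneg (u := fun x => dens n x * g x) hεr.le h.contw.continuousOn
    (fun x hx => h.dw (hε.trans hx.1)) (fun x hx => mul_nonneg
      (dens_nonneg n (hε.trans hx.1).le)
      (hf.trans (h.anti hM (hε.trans hx.1).le hx.2.le)))
  simp only [h.g0, mul_zero] at h1
  exact pos_of_mul_pos_right (h1.trans_le h2) hd.le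

/-- A truncated solution that never becomes negative is a positive profile. -/
theorem prof (h : TProf n σ M a f g) (ha : 0 < a) (haM : a ≤ M)
    (hf : ∀ r, 0 < r → 0 ≤ f r) : Prof n σ a f g := by
  have hM : 0 ≤ M := ha.le.trans haM
  have hg : ∀ r, 0 < r → 0 < g r := fun r hr => h.g_pos hM ha hr (hf r hr)
  have hdf : ∀ r, 0 < r → HasDerivAt f (-(g r ^ σ)) r := fun r hr => by
    rw [← trunc_eq (hg r hr).le (h.g_le hM ha.le haM hr)]
    exact h.df r hr
  refine ⟨h.contf.continuousOn, h.contg.continuousOn, h.f0, h.g0, hdf, h.dg, fun r hr => ?_, hg⟩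
  have := lt_of_deriv_neg (u := f) (lt_add_one r) h.contf.continuousOn
    (fun x hx => hdf x (hr.trans_lt hx.1))
    (fun x hx => neg_neg_of_pos (rpow_pos_of_pos (hg x (hr.trans_lt hx.1)) _))
  exact (hf _ (by linarith)).trans_lt this

/-- The set `0 < f < δ`, `g < δ`, `g^σ < f` is invariant: an orbit that enters it stays positive
for ever.  The value of `δ` makes the vector field point inwards on `f = g^σ`, because there
`(g^σ - f)' ≤ g^σ (σ g^{σ-1} - σ + 1)`. -/
theorem pos_of_mem_slow (h : TProf n σ M a f g) (ha : 0 < a) (haM : a ≤ M) (hσ : 1 < σ) {δ : ℝ}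
    (hδ : 0 < δ) (hδσ : δ ^ (σ - 1) = (σ - 1) / (2 * σ)) {r₀ : ℝ} (hr₀ : 0 < r₀)
    (hf0 : 0 < f r₀) (hf : f r₀ < δ) (hg : g r₀ < δ) (hgf : g r₀ ^ σ < f r₀) :
    ∀ r, 0 < r → 0 < f r := by
  have hM : 0 ≤ M := ha.le.trans haM
  intro r hr
  by_contra! hneg
  have hr₀r : r₀ ≤ r := by
    by_contra! h1
    linarith [h.anti hM hr.le h1.le]
  obtain ⟨r₂, hr₂, hfr₂⟩ := intermediate_value_Icc' hr₀r h.contf.continuousOn ⟨hneg, hf0.le⟩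
  have hpos : ∀ x, r₀ ≤ x → 0 < x := fun x hx => hr₀.trans_le hx
  have hfx : ∀ x ∈ Icc r₀ r₂, 0 ≤ f x := fun x hx => by
    rw [← hfr₂]; exact h.anti hM (hpos x hx.1).le hx.2
  have hgx : ∀ x ∈ Icc r₀ r₂, 0 < g x := fun x hx => h.g_pos hM ha (hpos x hx.1) (hfx x hx)
  -- `(ρ (δ - g))' ≥ ρ (δ - f) ≥ 0`, so that `g < δ` persists
  have hgδ : ∀ x ∈ Icc r₀ r₂, g x < δ := fun x hx => by
    have hd := dens_pos n (hpos x hx.1)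
    have h1 := le_of_deriv_nonneg (u := fun x => δ * dens n x - dens n x * g x) hx.1
      (((dens_cont n).const_mul δ).sub h.contw).continuousOn
      (fun y hy => ((dens_deriv n (hr₀.trans hy.1)).const_mul δ).sub (h.dw (hr₀.trans hy.1)))
      (fun y hy => by
        have h2 := h.anti hM hr₀.le hy.1.le
        have h3 := dens_pos n (hr₀.trans hy.1)
        have h4 : 0 ≤ (n : ℝ) / y := div_nonneg (by positivity) (hr₀.trans hy.1).le
        have h5 : 0 ≤ dens n y * (δ * (n / y)) := by positivity
        nlinarith)
    have h2 : dens n r₀ * g r₀ < dens n r₀ * δ := mul_lt_mul_of_pos_left hg (dens_pos n hr₀)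
    have h3 : dens n x * g x < dens n x * δ := by nlinarith
    exact lt_of_mul_lt_mul_left h3 hd.le
  have hσ0 : 0 < σ := by linarith
  -- on the boundary `f = g^σ` the vector field points inwards
  have key : ∀ x ∈ Icc r₀ r₂, g x ^ σ - f x ≤ 0 := by
    refine fun x hx => image_le_of_deriv_right_lt_deriv_boundary
      (f := fun x => g x ^ σ - f x)
      (f' := fun x => σ * g x ^ (σ - 1) * (f x - (n / x + 1) * g x) + g x ^ σ)
      (B := fun _ => 0) (B' := fun _ => 0) (a := r₀) (b := r₂) ?_ ?_ ?_ ?_ ?_ hx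
    · exact ((h.contg.rpow_const fun _ => Or.inr hσ0.le).sub h.contf).continuousOn
    · intro y hy
      have hy0 := hpos y hy.1
      have hgy := hgx y ⟨hy.1, hy.2.le⟩
      have h1 := (h.dg y hy0).rpow_const (p := σ) (Or.inl hgy.ne')
      have h2 := h.df y hy0
      rw [trunc_eq hgy.le (h.g_le hM ha.le haM hy0)] at h2
      refine ((h1.sub h2).congr_deriv ?_).hasDerivWithinAt
      ring
    · linarith
    · exact fun y => hasDerivAt_const y 0
    · intro y hy hy2
      have hy0 := hpos y hy.1
      have hgy := hgx y ⟨hy.1, hy.2.le⟩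
      have hgd := hgδ y ⟨hy.1, hy.2.le⟩
      have e : f y = g y ^ σ := by linarith
      have e2 : g y ^ σ = g y ^ (σ - 1) * g y := by
        rw [← rpow_add_one hgy.ne']; ring_nf
      have h1 : g y ^ (σ - 1) < (σ - 1) / (2 * σ) := by
        rw [← hδσ]; exact rpow_lt_rpow hgy.le hgd (by linarith)
      have h2 : 0 < g y ^ (σ - 1) := rpow_pos_of_pos hgy _
      have h3 : 0 ≤ (n : ℝ) / y := div_nonneg (by positivity) hy0.le
      rw [lt_div_iff₀ (by positivity)] at h1
      rw [e, e2]
      have h4 : 0 < g y ^ (σ - 1) * g y := by positivity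
      have h5 : 0 ≤ g y ^ (σ - 1) * g y * (σ * (n / y)) := by positivity
      nlinarith
  have h1 := key r₂ ⟨hr₂.1, le_rfl⟩
  have h2 := rpow_pos_of_pos (hgx r₂ ⟨hr₂.1, le_rfl⟩) σ
  linarith

end TProf

/-! ### Large initial values -/

theorem pow_div_le_vol (n : ℕ) {r : ℝ} (hr : 0 ≤ r) : r ^ (n + 1) / (n + 1) ≤ vol n r := by
  have h := le_of_deriv_nonneg (u := fun x => vol n x - x ^ (n + 1) / (n + 1)) hr
    ((vol_cont n).sub (by fun_prop)).continuousOn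
    (fun x _ => (vol_deriv n x).sub ((hasDerivAt_pow (n + 1) x).div_const _)) (fun x hx => by
      have h1 : 1 ≤ exp x := one_le_exp hx.1.le
      have h2 : 0 ≤ x ^ n := pow_nonneg hx.1.le n
      have h3 : (n : ℝ) + 1 ≠ 0 := by positivity
      have e : ((n + 1 : ℕ) : ℝ) * x ^ (n + 1 - 1) / (n + 1) = x ^ n := by
        rw [Nat.add_sub_cancel]
        push_cast
        field_simp
      rw [e, dens]
      nlinarith)
  simp only [vol_zero] at h
  have : (0:ℝ) ^ (n + 1) / (n + 1) = 0 := by simp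
  linarith

theorem vol_le_mul_dens (n : ℕ) {r : ℝ} (hr : 0 ≤ r) : vol n r ≤ r * dens n r := by
  have h := le_of_deriv_nonneg (u := fun x => x * dens n x - vol n x) hr
    ((continuous_id.mul (dens_cont n)).sub (vol_cont n)).continuousOn
    (fun x hx => ((hasDerivAt_id x).mul (dens_deriv n hx.1)).sub (vol_deriv n x)) (fun x hx => by
      have h1 := dens_pos n hx.1
      have h2 : 0 ≤ (n : ℝ) / x := div_nonneg (by positivity) hx.1.le
      have h3 := hx.1
      simp only [id]
      have : 0 ≤ x * (dens n x * (n / x + 1)) := by positivity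
      linarith)
  simp only [vol_zero] at h
  linarith

theorem tendsto_of_mono_bdd {w : ℝ → ℝ} {R C : ℝ} (hm : ∀ x y, R ≤ x → x ≤ y → w x ≤ w y)
    (hC : ∀ x, R ≤ x → w x ≤ C) : ∃ l, w R ≤ l ∧ Tendsto w atTop (nhds l) := by
  have hmono : Monotone fun x => w (max x R) := fun x y hxy =>
    hm _ _ (le_max_right _ _) (max_le_max_right R hxy)
  have hb : BddAbove (range fun x => w (max x R)) := ⟨C, by
    rintro _ ⟨x, rfl⟩; exact hC _ (le_max_right _ _)⟩
  refine ⟨_, ?_, (tendsto_atTop_ciSup hmono hb).congr' ?_⟩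
  · have := le_ciSup hb R
    simpa using this
  · filter_upwards [eventually_ge_atTop R] with x hx
    rw [max_eq_left hx]

namespace Prof

variable {n : ℕ} {σ a : ℝ} {f g : ℝ → ℝ}

theorem dw (h : Prof n σ a f g) {r : ℝ} (hr : 0 < r) :
    HasDerivAt (fun x => dens n x * g x) (dens n r * f r) r :=
  ((dens_deriv n hr).mul (h.dg r hr)).congr_deriv (by ring)

theorem contw (h : Prof n σ a f g) : ContinuousOn (fun x => dens n x * g x) (Ici 0) :=
  (dens_cont n).continuousOn.mul h.contg

theorem Icc_subset_Ici_zero {x y : ℝ} (hx : 0 ≤ x) : Icc x y ⊆ Ici 0 := fun _ ht => hx.trans ht.1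

theorem anti (h : Prof n σ a f g) {x y : ℝ} (hx : 0 ≤ x) (hxy : x ≤ y) : f y ≤ f x :=
  le_of_deriv_nonpos hxy (h.contf.mono (Icc_subset_Ici_zero hx)) (fun t ht => h.df t (hx.trans_lt ht.1))
    fun t ht => neg_nonpos.2 (rpow_nonneg (h.gpos t (hx.trans_lt ht.1)).le _)

theorem w_mono (h : Prof n σ a f g) {x y : ℝ} (hx : 0 ≤ x) (hxy : x ≤ y) :
    dens n x * g x ≤ dens n y * g y :=
  le_of_deriv_nonneg (u := fun x => dens n x * g x) hxy (h.contw.mono (Icc_subset_Ici_zero hx))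
    (fun _ ht => h.dw (hx.trans_lt ht.1))
    fun t ht => mul_nonneg (dens_nonneg n (hx.trans_lt ht.1).le)
      (h.fpos t (hx.trans_lt ht.1).le).le

theorem w_pos (h : Prof n σ a f g) {x : ℝ} (hx : 0 < x) : 0 < dens n x * g x :=
  mul_pos (dens_pos n hx) (h.gpos x hx)

theorem f_le (h : Prof n σ a f g) {x : ℝ} (hx : 0 ≤ x) : f x ≤ a := by
  rw [← h.f0]; exact h.anti le_rfl hx

theorem a_pos (h : Prof n σ a f g) : 0 < a := by
  rw [← h.f0]; exact h.fpos 0 le_rfl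

theorem w_le (h : Prof n σ a f g) {r : ℝ} (hr : 0 ≤ r) : dens n r * g r ≤ a * vol n r := by
  have h1 := le_of_deriv_nonneg (u := fun x => a * vol n x - dens n x * g x) hr
    (((vol_cont n).const_mul a).continuousOn.sub (h.contw.mono (Icc_subset_Ici_zero le_rfl)))
    (fun x hx => ((vol_deriv n x).const_mul a).sub (h.dw hx.1)) (fun x hx => by
      have := h.f_le hx.1.le
      have := dens_pos n hx.1
      nlinarith)
  simp only [vol_zero, h.g0] at h1
  linarith

/-- `w > s f`, because `(w - s f)' = s g^σ > 0`. -/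
theorem lt_w (h : Prof n σ a f g) {r : ℝ} (hr : 0 < r) : vol n r * f r < dens n r * g r := by
  have h1 := lt_of_deriv_pos (u := fun x => dens n x * g x - vol n x * f x) hr
    ((h.contw.mono (Icc_subset_Ici_zero le_rfl)).sub ((vol_cont n).continuousOn.mul (h.contf.mono (Icc_subset_Ici_zero le_rfl))))
    (fun x hx => (h.dw hx.1).sub ((vol_deriv n x).mul (h.df x hx.1))) (fun x hx => by
      have h1 := vol_pos n hx.1
      have h2 := rpow_pos_of_pos (h.gpos x hx.1) σ
      nlinarith)
  simp only [vol_zero, h.g0] at h1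
  linarith

/-- `w(1/2)` is bounded by a constant that does not depend on the initial value: `w > s f` turns
the equation for `f` into `-f' ≥ (c f)^σ` on `[1/4, 1/2]`, which bounds `f(1/2)`, and `f` could not
stay positive up to `r = 1` if `w` were too large. -/
theorem w_half_le (n : ℕ) {σ : ℝ} (hσ : 1 < σ) :
    ∃ C, ∀ a f g, Prof n σ a f g → dens n (1 / 2) * g (1 / 2) ≤ C := by
  set c : ℝ := 1 / 4 / ((n + 1) * exp 1) with hc
  have hc0 : 0 < c := by positivity
  set c₂ : ℝ := (σ - 1) * c ^ σ / 4 with hc₂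
  have hcσ : 0 < c ^ σ := rpow_pos_of_pos hc0 _
  have hσ1 : 0 < σ - 1 := by linarith
  have hc₂0 : 0 < c₂ := by positivity
  set C : ℝ := c₂ ^ (1 / (1 - σ)) with hC
  have hC0 : 0 < C := rpow_pos_of_pos hc₂0 _
  refine ⟨exp 1 * (2 * C) ^ (1 / σ), fun a f g h => ?_⟩
  have hdens : ∀ x, 0 < x → x ≤ 1 → dens n x ≤ exp 1 := fun x hx hx1 => by
    unfold dens
    have h1 : x ^ n ≤ 1 := pow_le_one₀ hx.le hx1
    have h2 : exp x ≤ exp 1 := exp_le_exp.2 hx1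
    calc _ ≤ 1 * exp 1 := by gcongr
      _ = _ := one_mul _
  -- `(f^{1-σ})' ≥ (σ - 1) c^σ`
  have hf : f (1 / 2) ≤ C := by
    have h1 := le_of_deriv_nonneg (a := 1 / 4) (b := 1 / 2)
      (u := fun x => f x ^ (1 - σ) - (σ - 1) * c ^ σ * x)
      (u' := fun x => (σ - 1) * (f x ^ (-σ) * g x ^ σ) - (σ - 1) * c ^ σ) (by norm_num)
      (by
        refine ContinuousOn.sub (ContinuousOn.rpow_const (h.contf.mono (Icc_subset_Ici_zero (by norm_num)))
          fun x hx => Or.inl (h.fpos x ?_).ne') (by fun_prop)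
        exact le_trans (by norm_num) hx.1)
      (fun x hx => by
        have hx0 : 0 < x := lt_trans (by norm_num) hx.1
        have h2 := (h.df x hx0).rpow_const (p := 1 - σ) (Or.inl (h.fpos x hx0.le).ne')
        refine (h2.sub ((hasDerivAt_id x).const_mul ((σ - 1) * c ^ σ))).congr_deriv ?_
        have : (1 - σ - 1) = -σ := by ring
        rw [this]
        ring)
      (fun x hx => by
        have hx0 : 0 < x := lt_trans (by norm_num) hx.1
        have hx1 : x ≤ 1 := hx.2.le.trans (by norm_num)
        have hfx := h.fpos x hx0.le
        have hgc : c * f x ≤ g x := by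
          have h2 := (h.lt_w hx0).le
          have h3 := pow_div_le_vol n hx0.le
          have e1 : exp x ≤ exp 1 := exp_le_exp.2 hx1
          have hxn : 0 < x ^ n := by positivity
          have h5 : x ^ n * (x / (n + 1) * f x) ≤ x ^ n * (exp x * g x) := by
            have h4 : x ^ (n + 1) / (n + 1) * f x ≤ vol n x * f x := by gcongr
            unfold dens at h2
            calc _ = x ^ (n + 1) / (n + 1) * f x := by ring
              _ ≤ _ := h4.trans (h2.trans_eq (by ring))
          have h6 := le_of_mul_le_mul_left h5 hxn
          have h7 : c * f x * exp 1 ≤ g x * exp 1 := by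
            calc _ = 1 / 4 / (n + 1) * f x := by rw [hc]; field_simp
              _ ≤ x / (n + 1) * f x := by have := hx.1.le; gcongr
              _ ≤ exp x * g x := h6
              _ ≤ exp 1 * g x := by have := (h.gpos x hx0).le; gcongr
              _ = _ := mul_comm _ _
          exact le_of_mul_le_mul_right h7 (exp_pos _)
        have h8 : c ^ σ * f x ^ σ ≤ g x ^ σ := by
          rw [← mul_rpow hc0.le hfx.le]
          exact rpow_le_rpow (by positivity) hgc (by linarith)
        have h9 : c ^ σ ≤ f x ^ (-σ) * g x ^ σ := by
          rw [rpow_neg hfx.le, ← div_eq_inv_mul, le_div_iff₀ (rpow_pos_of_pos hfx _)]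
          exact h8
        nlinarith)
    have h2 := rpow_pos_of_pos (h.fpos (1 / 4) (by norm_num)) (1 - σ)
    have h3 : c₂ ≤ f (1 / 2) ^ (1 - σ) := by rw [hc₂]; linarith
    have hfp := h.fpos (1 / 2) (by norm_num)
    have h4 := rpow_le_rpow_of_nonpos hc₂0 h3 (z := 1 / (1 - σ))
      (div_nonpos_of_nonneg_of_nonpos zero_le_one (by linarith))
    rwa [← rpow_mul hfp.le, mul_one_div_cancel (by linarith), rpow_one] at h4
  -- since `w` increases, a large `w(1/2)` would force `f` to vanish before `r = 1`
  set W := dens n (1 / 2) * g (1 / 2) with hW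
  have hW0 : 0 < W := h.w_pos (by norm_num)
  have h1 := le_of_deriv_nonpos (a := 1 / 2) (b := 1)
    (u := fun x => f x + (W / exp 1) ^ σ * x) (u' := fun x => -(g x ^ σ) + (W / exp 1) ^ σ)
    (by norm_num) ((h.contf.mono (Icc_subset_Ici_zero (by norm_num))).add (by fun_prop))
    (fun x hx => by
      refine ((h.df x (lt_trans (by norm_num) hx.1)).add
        ((hasDerivAt_id x).const_mul ((W / exp 1) ^ σ))).congr_deriv ?_
      ring)
    (fun x hx => by
      have hx0 : 0 < x := lt_trans (by norm_num) hx.1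
      have h2 : W ≤ dens n x * g x := h.w_mono (by norm_num) hx.1.le
      have h3 : W / exp 1 ≤ g x := by
        rw [div_le_iff₀ (exp_pos _)]
        have := hdens x hx0 hx.2.le
        have := h.gpos x hx0
        nlinarith
      have := rpow_le_rpow (by positivity) h3 (z := σ) (by linarith)
      linarith)
  have h2 := h.fpos 1 zero_le_one
  have h3 : (W / exp 1) ^ σ ≤ 2 * C := by linarith
  have h4 := rpow_le_rpow (rpow_nonneg (by positivity) _) h3 (z := 1 / σ) (by positivity)
  rw [← rpow_mul (by positivity), mul_one_div_cancel (by linarith), rpow_one,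
    div_le_iff₀ (exp_pos _)] at h4
  linarith

/-- For large initial values there is no positive profile.  Here `σ < (n+2)/n` is the condition
`p > 2N/(N+1)`: at the length scale `l = a^{-(σ-1)/(σ+1)}`, on which `f` stays above `a / 2`, it
makes `w ≳ a l^{n+1}` tend to infinity with `a`, whereas `w(1/2)` is bounded. -/
theorem not_of_large (n : ℕ) {σ : ℝ} (hσ : 1 < σ) (hσn : n * σ < n + 2) :
    ∃ A, ∀ a, A ≤ a → ∀ f g, ¬ Prof n σ a f g := by
  obtain ⟨C, hC⟩ := w_half_le n hσ
  -- the exponent of `a` in `a l^{n+1}`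
  set e₀ : ℝ := 1 - (n + 1) * ((σ - 1) / (σ + 1)) with he₀
  have hσ1 : 0 < σ + 1 := by linarith
  have he : 0 < e₀ := by
    rw [he₀, sub_pos, ← mul_div_assoc, div_lt_one hσ1]; linarith
  obtain ⟨A, hA⟩ := eventually_atTop.1
    ((tendsto_rpow_atTop he).eventually_gt_atTop (C * (2 ^ (n + 2) * (n + 1))))
  refine ⟨max A 1, fun a ha f g h => ?_⟩
  have hA1 := hA a ((le_max_left _ _).trans ha)
  have ha1 : 1 ≤ a := (le_max_right _ _).trans ha
  have ha0 : 0 < a := by linarith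
  set l : ℝ := a ^ (-((σ - 1) / (σ + 1))) with hl
  have hl0 : 0 < l := rpow_pos_of_pos ha0 _
  have hl1 : l ≤ 1 := rpow_le_one_of_one_le_of_nonpos ha1
    (neg_nonpos.2 (div_nonneg (by linarith) hσ1.le))
  have hr0 : 0 < l / 2 := by positivity
  have h1 := le_of_deriv_nonneg (a := 0) (b := l / 2)
    (u := fun x => f x + (a * (l / 2)) ^ σ * x)
    (u' := fun x => -(g x ^ σ) + (a * (l / 2)) ^ σ)
    hr0.le ((h.contf.mono (Icc_subset_Ici_zero le_rfl)).add (by fun_prop))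
    (fun x hx => by
      refine ((h.df x hx.1).add
        ((hasDerivAt_id x).const_mul ((a * (l / 2)) ^ σ))).congr_deriv ?_
      ring)
    (fun x hx => by
      have hd := dens_pos n hx.1
      have h2 := h.w_le hx.1.le
      have h3 := vol_le_mul_dens n hx.1.le
      have h4 : dens n x * g x ≤ dens n x * (a * x) := by nlinarith
      have h5 := le_of_mul_le_mul_left h4 hd
      have h6 : g x ≤ a * (l / 2) := h5.trans (by have := hx.2.le; gcongr)
      have := rpow_le_rpow (h.gpos x hx.1).le h6 (z := σ) (by linarith)
      linarith)
  simp only [h.f0, mul_zero, add_zero] at h1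
  have h2 : (a * (l / 2)) ^ σ * (l / 2) ≤ a / 2 := by
    have e1 : l ^ (σ + 1) = a ^ (-(σ - 1)) := by
      rw [hl, ← rpow_mul ha0.le]; congr 1; field_simp
    have e2 : a ^ σ * a ^ (-(σ - 1)) = a := by
      rw [← rpow_add ha0]; ring_nf; exact rpow_one a
    have e3 : (a * (l / 2)) ^ σ * (l / 2) = a * (1 / 2) ^ (σ + 1) := by
      calc _ = a ^ σ * ((l / 2) ^ σ * (l / 2)) := by rw [mul_rpow ha0.le hr0.le]; ring
        _ = a ^ σ * (l ^ (σ + 1) * (1 / 2) ^ (σ + 1)) := by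
          rw [← rpow_add_one hr0.ne', ← mul_rpow hl0.le (by norm_num)]; ring_nf
        _ = _ := by rw [e1, ← mul_assoc, e2]
    rw [e3]
    have : ((1:ℝ) / 2) ^ (σ + 1) ≤ (1 / 2) ^ (1:ℝ) :=
      rpow_le_rpow_of_exponent_ge (by norm_num) (by norm_num) (by linarith)
    rw [rpow_one] at this
    nlinarith
  have h3 : a / 2 ≤ f (l / 2) := by linarith
  have h4 := (h.lt_w hr0).le
  have h5 := pow_div_le_vol n hr0.le
  have h6 := h.w_mono hr0.le (show l / 2 ≤ 1 / 2 by linarith)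
  have h7 := hC a f g h
  have h8 : (l / 2) ^ (n + 1) / (n + 1) * (a / 2) ≤ C :=
    calc _ ≤ vol n (l / 2) * f (l / 2) := by
          have := vol_nonneg n hr0.le
          gcongr
      _ ≤ C := h4.trans (h6.trans h7)
  have e4 : a * l ^ (n + 1) = a ^ e₀ := by
    have e5 : e₀ = 1 + -((σ - 1) / (σ + 1)) * ((n + 1 : ℕ) : ℝ) := by
      rw [he₀]; push_cast; ring
    rw [hl, ← rpow_mul_natCast ha0.le, e5, rpow_add ha0, rpow_one]
  have h9 : a ^ e₀ = (l / 2) ^ (n + 1) / (n + 1) * (a / 2) * (2 ^ (n + 2) * (n + 1)) := by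
    rw [← e4, div_pow]
    field_simp
    ring
  have h10 : a ^ e₀ ≤ C * (2 ^ (n + 2) * (n + 1)) := by rw [h9]; gcongr
  linarith

/-- Positive profiles tend to `0` at infinity. -/
theorem f_tendsto (h : Prof n σ a f g) (hσ : 0 ≤ σ) (η : ℝ) (hη : 0 < η) :
    ∃ R, 0 < R ∧ ∀ r, R ≤ r → f r < η := by
  by_contra! hcon
  have hf : ∀ r, 0 ≤ r → η ≤ f r := fun r hr => by
    obtain ⟨x, hx, hx2⟩ := hcon (r + 1) (by linarith)
    exact hx2.trans (h.anti hr (by linarith))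
  -- `g` is then eventually larger than `η / 4`, so `f` decreases linearly
  set R₀ : ℝ := n + 1 with hR₀
  have hR₀0 : 0 < R₀ := by positivity
  have hw : ∀ r, R₀ ≤ r → η / 2 * (dens n r - dens n R₀) ≤ dens n r * g r := fun r hr => by
    have h1 := le_of_deriv_nonneg (u := fun x => dens n x * g x - η / 2 * dens n x) hr
      ((h.contw.mono (Icc_subset_Ici_zero hR₀0.le)).sub ((dens_cont n).const_mul _).continuousOn)
      (fun x hx => (h.dw (hR₀0.trans hx.1)).sub
        ((dens_deriv n (hR₀0.trans hx.1)).const_mul (η / 2))) (fun x hx => by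
        have hx0 := hR₀0.trans hx.1
        have h1 := dens_pos n hx0
        have h2 : (n : ℝ) / x ≤ 1 := by rw [div_le_one hx0]; linarith [hx.1]
        have h3 := hf x hx0.le
        have h4 : η / 2 * (n / x + 1) ≤ f x := by nlinarith
        nlinarith)
    have h2 := h.w_pos hR₀0
    linarith
  obtain ⟨R₁, hR₁⟩ := eventually_atTop.1
    (((dens_atTop n).eventually_ge_atTop (2 * dens n R₀)).and (eventually_ge_atTop R₀))
  have hg : ∀ r, R₁ ≤ r → η / 4 ≤ g r := fun r hr => by
    obtain ⟨h1, h2⟩ := hR₁ r hr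
    have h3 := hw r h2
    have h4 := dens_pos n (hR₀0.trans_le h2)
    have h5 : dens n r * (η / 4) ≤ dens n r * g r := by nlinarith
    exact le_of_mul_le_mul_left h5 h4
  have hR₁0 : 0 < R₁ := hR₀0.trans_le (hR₁ R₁ le_rfl).2
  have hκ : 0 < (η / 4) ^ σ := rpow_pos_of_pos (by positivity) _
  set R₂ := R₁ + f R₁ / (η / 4) ^ σ with hR₂
  have hfR₁ := h.fpos R₁ hR₁0.le
  have hR₁₂ : R₁ ≤ R₂ := by
    have : 0 < f R₁ / (η / 4) ^ σ := by positivity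
    linarith
  have h1 := le_of_deriv_nonpos (u := fun x => f x + (η / 4) ^ σ * x) hR₁₂
    ((h.contf.mono (Icc_subset_Ici_zero hR₁0.le)).add (by fun_prop))
    (fun x hx => (h.df x (hR₁0.trans hx.1)).add ((hasDerivAt_id x).const_mul _)) (fun x hx => by
      have := rpow_le_rpow (by positivity) (hg x hx.1.le) hσ
      linarith)
  have h2 := h.fpos R₂ (hR₁0.le.trans hR₁₂)
  have h3 : (η / 4) ^ σ * R₂ = (η / 4) ^ σ * R₁ + f R₁ := by
    rw [hR₂]; field_simp
  linarith

end Prof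

/-! ### Decay at infinity -/

namespace Prof

variable {n : ℕ} {σ a : ℝ} {f g : ℝ → ℝ}

theorem g_eventually_lt (h : Prof n σ a f g) (hσ : 0 ≤ σ) (η : ℝ) (hη : 0 < η) :
    ∃ R, 0 < R ∧ ∀ r, R ≤ r → g r < η := by
  obtain ⟨R, hR, hf⟩ := h.f_tendsto hσ (η / 2) (by positivity)
  obtain ⟨R₁, hR₁⟩ := eventually_atTop.1
    (((dens_atTop n).eventually_gt_atTop (2 / η * (dens n R * g R))).and (eventually_ge_atTop R))
  refine ⟨R₁, hR.trans_le (hR₁ R₁ le_rfl).2, fun r hr => ?_⟩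
  obtain ⟨h1, h2⟩ := hR₁ r hr
  have h3 := le_of_deriv_nonpos (u := fun x => dens n x * g x - η / 2 * dens n x) h2
    ((h.contw.mono (Icc_subset_Ici_zero hR.le)).sub ((dens_cont n).const_mul _).continuousOn)
    (fun x hx => (h.dw (hR.trans hx.1)).sub
      ((dens_deriv n (hR.trans hx.1)).const_mul (η / 2))) (fun x hx => by
      have hx0 := hR.trans hx.1
      have h1 := dens_pos n hx0
      have h2 : 0 ≤ (n : ℝ) / x := div_nonneg (by positivity) hx0.le
      have h3 := hf x hx.1.le
      have h4 : f x ≤ η / 2 * (n / x + 1) := by nlinarith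
      nlinarith)
  have h4 := dens_pos n (hR.trans_le h2)
  have h5 := dens_pos n hR
  have h6 : dens n R * g R < η / 2 * dens n r := by
    have : dens n R * g R = η / 2 * (2 / η * (dens n R * g R)) := by field_simp
    rw [this]; gcongr
  have h7 : 0 ≤ η / 2 * dens n R := by positivity
  have h8 : dens n r * g r < dens n r * η := by linarith
  exact lt_of_mul_lt_mul_left h8 h4.le

/-- If the orbit never enters the invariant set of slowly decaying solutions, then `w` is
bounded: from `f ≤ g^σ` one gets `w' ≤ w g^{σ-1}`, first with `g^{σ-1} ≤ 1/2`, which gives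
exponential decay of `g`, and then with an integrable coefficient. -/
theorem w_bdd_of_not_slow (h : Prof n σ a f g) (hσ : 1 < σ) {δ : ℝ} (hδ : 0 < δ)
    (hδσ : δ ^ (σ - 1) ≤ 1 / 2)
    (hns : ∀ r, 0 < r → f r < δ → g r < δ → f r ≤ g r ^ σ) :
    ∃ R C, 0 < R ∧ ∀ r, R ≤ r → dens n r * g r ≤ C := by
  have hσ0 : 0 ≤ σ := by linarith
  obtain ⟨R₁, hR₁, hf⟩ := h.f_tendsto hσ0 δ hδ
  obtain ⟨R₂, hR₂, hg⟩ := h.g_eventually_lt hσ0 δ hδ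
  set R := max 1 (max R₁ R₂) with hR
  have hR1 : 1 ≤ R := le_max_left _ _
  have hR0 : 0 < R := by linarith
  have hpos : ∀ {x}, R ≤ x → 0 < x := fun hx => hR0.trans_le hx
  have hfg : ∀ x, R ≤ x → f x ≤ g x ^ (σ - 1) * g x := fun x hx => by
    rw [← rpow_add_one (h.gpos x (hpos hx)).ne']
    have h1 : R₁ ≤ x := ((le_max_left _ _).trans (le_max_right _ _)).trans hx
    have h2 : R₂ ≤ x := ((le_max_right _ _).trans (le_max_right _ _)).trans hx
    have := hns x (hpos hx) (hf x h1) (hg x h2)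
    simpa using this
  have hhalf : ∀ x, R ≤ x → g x ^ (σ - 1) ≤ 1 / 2 := fun x hx => by
    have h2 : R₂ ≤ x := ((le_max_right _ _).trans (le_max_right _ _)).trans hx
    exact (rpow_le_rpow (h.gpos x (hpos hx)).le (hg x h2).le (by linarith)).trans hδσ
  set C := dens n R * g R * exp (-(1 / 2 * R)) with hC
  have hC0 : 0 < C := mul_pos (h.w_pos hR0) (exp_pos _)
  have hdexp : ∀ (k x : ℝ), HasDerivAt (fun x => exp (-(k * x))) (-k * exp (-(k * x))) x :=
    fun k x => by
      refine ((hasDerivAt_id x).const_mul k).neg.exp.congr_deriv ?_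
      simp; ring
  have hw1 : ∀ x, R ≤ x → dens n x * g x * exp (-(1 / 2 * x)) ≤ C := fun x hx =>
    le_of_deriv_nonpos (u := fun x => dens n x * g x * exp (-(1 / 2 * x))) hx
      ((h.contw.mono (Icc_subset_Ici_zero hR0.le)).mul (by fun_prop))
      (fun y hy => (h.dw (hpos hy.1.le)).mul (hdexp (1 / 2) y)) (fun y hy => by
        have h1 := hfg y hy.1.le
        have h2 := hhalf y hy.1.le
        have h3 := h.gpos y (hpos hy.1.le)
        have h4 := dens_pos n (hpos hy.1.le)
        have h5 : dens n y * f y ≤ dens n y * (1 / 2 * g y) := by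
          gcongr; nlinarith
        have h6 := exp_pos (-(1 / 2 * y))
        nlinarith)
  have hg2 : ∀ x, R ≤ x → g x ≤ C * exp (-(1 / 2 * x)) := fun x hx => by
    have h1 := hw1 x hx
    have h2 := exp_le_dens n (hR1.trans hx)
    have h3 := h.gpos x (hpos hx)
    have h4 : exp x = exp (1 / 2 * x) * exp (1 / 2 * x) := by rw [← exp_add]; ring_nf
    rw [exp_neg] at h1 ⊢
    rw [← div_eq_mul_inv] at h1 ⊢
    rw [div_le_iff₀ (exp_pos _)] at h1
    rw [le_div_iff₀ (exp_pos _)]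
    have h5 : exp (1 / 2 * x) * (g x * exp (1 / 2 * x)) ≤ exp (1 / 2 * x) * C := by
      calc _ = exp x * g x := by rw [h4]; ring
        _ ≤ dens n x * g x := by gcongr
        _ ≤ _ := by linarith
    exact le_of_mul_le_mul_left h5 (exp_pos _)
  set β : ℝ := (σ - 1) / 2 with hβ
  have hβ0 : 0 < β := by rw [hβ]; linarith
  have hgσ : ∀ x, R ≤ x → g x ^ (σ - 1) ≤ C ^ (σ - 1) * exp (-(β * x)) := fun x hx => by
    refine (rpow_le_rpow (h.gpos x (hpos hx)).le (hg2 x hx) (by linarith)).trans_eq ?_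
    rw [mul_rpow hC0.le (exp_pos _).le, ← exp_mul]
    congr 2
    rw [hβ]; ring
  set D : ℝ := C ^ (σ - 1) / β with hD
  have hD0 : 0 < D := div_pos (rpow_pos_of_pos hC0 _) hβ0
  refine ⟨R, exp (log (dens n R * g R) + D * exp (-(β * R))), hR0, fun r hr => ?_⟩
  have h1 := le_of_deriv_nonpos (u := fun x => log (dens n x * g x) + D * exp (-(β * x))) hr
    (((h.contw.mono (Icc_subset_Ici_zero hR0.le)).log fun x hx => (h.w_pos (hpos hx.1)).ne').add (by fun_prop))
    (fun y hy => ((h.dw (hpos hy.1.le)).log (h.w_pos (hpos hy.1.le)).ne').add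
      ((hdexp β y).const_mul D)) (fun y hy => by
      have h3 := h.gpos y (hpos hy.1.le)
      have h4 := dens_pos n (hpos hy.1.le)
      have h5 : dens n y * f y / (dens n y * g y) ≤ C ^ (σ - 1) * exp (-(β * y)) := by
        rw [mul_div_mul_left _ _ h4.ne', div_le_iff₀ h3]
        exact (hfg y hy.1.le).trans (by have := hgσ y hy.1.le; gcongr)
      have h6 : D * (-β * exp (-(β * y))) = -(C ^ (σ - 1) * exp (-(β * y))) := by
        rw [hD]; field_simp
      rw [h6]
      linarith)
  rw [← log_le_iff_le_exp (h.w_pos (hpos hr))]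
  have h2 : 0 < D * exp (-(β * r)) := mul_pos hD0 (exp_pos _)
  linarith

theorem f_lim (h : Prof n σ a f g) (hσ : 0 ≤ σ) : Tendsto f atTop (nhds 0) := by
  rw [Metric.tendsto_atTop]
  intro ε hε
  obtain ⟨R₁, h1, h2⟩ := h.f_tendsto hσ ε hε
  refine ⟨R₁, fun r hr => ?_⟩
  rw [Real.dist_eq, sub_zero, abs_of_pos (h.fpos r (h1.le.trans hr))]
  exact h2 r hr

theorem g_lim (h : Prof n σ a f g) (hσ : 0 ≤ σ) : Tendsto g atTop (nhds 0) := by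
  rw [Metric.tendsto_atTop]
  intro ε hε
  obtain ⟨R₁, h1, h2⟩ := h.g_eventually_lt hσ ε hε
  refine ⟨R₁, fun r hr => ?_⟩
  rw [Real.dist_eq, sub_zero, abs_of_pos (h.gpos r (h1.trans_le hr))]
  exact h2 r hr

/-- If `w` is bounded, hence convergent, then `f ρ^σ` has a positive limit. -/
theorem fast_of_w_bdd (h : Prof n σ a f g) (hσ : 1 < σ) {R C : ℝ} (hR : 0 < R)
    (hC : ∀ r, R ≤ r → dens n r * g r ≤ C) :
    ∃ c, 0 < c ∧ Tendsto (fun r => f r * dens n r ^ σ) atTop (nhds c) := by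
  have hσ0 : 0 < σ := by linarith
  obtain ⟨l, hl, hlim⟩ := tendsto_of_mono_bdd (w := fun r => dens n r * g r)
    (fun x y hx hxy => h.w_mono (hR.le.trans hx) hxy) hC
  have hl0 : 0 < l := (h.w_pos hR).trans_le hl
  -- l'Hôpital for `f / ρ^{-σ}`: the quotient of the derivatives is `w^σ / (σ (n/r + 1))`
  refine ⟨l ^ σ / σ, div_pos (rpow_pos_of_pos hl0 _) hσ0, ?_⟩
  have hf := h.f_lim hσ0.le
  have hev : ∀ᶠ x : ℝ in atTop, 0 < x := eventually_gt_atTop 0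
  have hnx : Tendsto (fun x : ℝ => (n : ℝ) / x + 1) atTop (nhds 1) := by
    simpa using (tendsto_const_nhds (x := (n : ℝ)).div_atTop tendsto_id).add_const 1
  have hH := HasDerivAt.lhopital_zero_atTop (f := f) (g := fun x => dens n x ^ (-σ))
    (f' := fun x => -(g x ^ σ))
    (g' := fun x => -(σ * (n / x + 1) * dens n x ^ (-σ))) (l := nhds (l ^ σ / σ))
    (hev.mono fun x hx => h.df x hx)
    (hev.mono fun x hx => by
      have hd := dens_pos n hx
      refine ((dens_deriv n hx).rpow_const (p := -σ) (Or.inl hd.ne')).congr_deriv ?_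
      rw [rpow_sub_one hd.ne']
      field_simp)
    (hev.mono fun x hx => by
      have hd := rpow_pos_of_pos (dens_pos n hx) (-σ)
      have : 0 ≤ (n : ℝ) / x := div_nonneg (by positivity) hx.le
      have : 0 < σ * (n / x + 1) * dens n x ^ (-σ) := by positivity
      exact (neg_neg_of_pos this).ne)
    hf ((tendsto_rpow_neg_atTop hσ0).comp (dens_atTop n))
    (by
      have h1 := (hlim.rpow_const (p := σ) (Or.inl hl0.ne')).div (hnx.const_mul σ)
        (by simpa using hσ0.ne')
      rw [mul_one] at h1
      refine h1.congr' (hev.mono fun x hx => ?_)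
      have hd := dens_pos n hx
      have : 0 ≤ (n : ℝ) / x := div_nonneg (by positivity) hx.le
      have hds := rpow_pos_of_pos hd σ
      simp only [Pi.div_apply]
      rw [mul_rpow hd.le (h.gpos x hx).le, rpow_neg hd.le]
      field_simp)
  refine hH.congr' (hev.mono fun x hx => ?_)
  have hd := dens_pos n hx
  simp only
  rw [rpow_neg hd.le, div_inv_eq_mul]

/-- Fast decay of `f` bounds `w`, because `w' = ρ f ≲ ρ^{1-σ}` is integrable. -/
theorem w_bdd_of_fast (h : Prof n σ a f g) (hσ : 1 < σ) {c : ℝ}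
    (hc : Tendsto (fun r => f r * dens n r ^ σ) atTop (nhds c)) :
    ∃ R C, 0 < R ∧ ∀ r, R ≤ r → dens n r * g r ≤ C := by
  obtain ⟨R₁, hR₁⟩ := eventually_atTop.1 (hc.eventually_lt_const (lt_add_one c))
  set R := max R₁ 1
  have hR1 : 1 ≤ R := le_max_right _ _
  have hR0 : 0 < R := by linarith
  have hpos : ∀ {x}, R ≤ x → 0 < x := fun hx => hR0.trans_le hx
  have hb : ∀ x, R ≤ x → dens n x * f x ≤ (c + 1) * exp (-((σ - 1) * x)) := fun x hx => by
    have h1 := hR₁ x ((le_max_left _ _).trans hx)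
    have hd := dens_pos n (hpos hx)
    have hc0 : 0 < c + 1 := (mul_pos (h.fpos x (hpos hx).le) (rpow_pos_of_pos hd _)).trans h1
    have h2 : dens n x ^ (1 - σ) ≤ exp (-((σ - 1) * x)) := by
      refine (rpow_le_rpow_of_nonpos (exp_pos x) (exp_le_dens n (hR1.trans hx))
        (by linarith)).trans_eq ?_
      rw [← exp_mul]; ring_nf
    calc dens n x * f x = f x * dens n x ^ σ * dens n x ^ (1 - σ) := by
          rw [mul_assoc, ← rpow_add hd]; simp [mul_comm]
      _ ≤ (c + 1) * exp (-((σ - 1) * x)) := by gcongr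
  set D := (c + 1) / (σ - 1) with hD
  have hσ1 : 0 < σ - 1 := by linarith
  have hD0 : 0 ≤ D := by
    have h1 := hR₁ R (le_max_left _ _)
    have := (mul_pos (h.fpos R hR0.le) (rpow_pos_of_pos (dens_pos n hR0) σ)).trans h1
    positivity
  refine ⟨R, dens n R * g R + D * exp (-((σ - 1) * R)), hR0, fun r hr => ?_⟩
  have h1 := le_of_deriv_nonpos
    (u := fun x => dens n x * g x + D * exp (-((σ - 1) * x)))
    (u' := fun x => dens n x * f x - (c + 1) * exp (-((σ - 1) * x))) hr
    ((h.contw.mono (Icc_subset_Ici_zero hR0.le)).add (by fun_prop))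
    (fun y hy => by
      refine ((h.dw (hpos hy.1.le)).add
        (((hasDerivAt_id y).const_mul (σ - 1)).neg.exp.const_mul D)).congr_deriv ?_
      rw [hD]
      simp
      field_simp
      ring) (fun y hy => by
      have := hb y hy.1.le
      linarith)
  have h2 : 0 ≤ D * exp (-((σ - 1) * r)) := mul_nonneg hD0 (exp_pos _).le
  linarith

end Prof

/-! ### The Pohozaev functional and uniqueness -/

/-- The Pohozaev functional `s f² - w f + (2/(σ+1)) s g^{σ+1}`, where `s = ∫₀^r ρ` and
`w = ρ g`. -/
noncomputable def poh (n : ℕ) (σ : ℝ) (f g : ℝ → ℝ) (r : ℝ) : ℝ :=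
  vol n r * f r ^ 2 - dens n r * g r * f r + 2 / (σ + 1) * (vol n r * g r ^ (σ + 1))

namespace Prof

variable {n : ℕ} {σ a : ℝ} {f g : ℝ → ℝ}

theorem poh_cont (h : Prof n σ a f g) (hσ : 1 < σ) : ContinuousOn (poh n σ f g) (Ici 0) := by
  have h1 := (vol_cont n).continuousOn (s := Ici 0)
  have h2 := h.contg.rpow_const (p := σ + 1) fun _ _ => Or.inr (by linarith)
  exact ((h1.mul (h.contf.pow 2)).sub (h.contw.mul h.contf)).add
    (continuousOn_const.mul (h1.mul h2))

theorem poh_zero (h : Prof n σ a f g) : poh n σ f g 0 = 0 := by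
  simp [poh, vol_zero, h.g0]

theorem poh_deriv (h : Prof n σ a f g) (hσ : 1 < σ) {r : ℝ} (hr : 0 < r) :
    HasDerivAt (poh n σ f g) (dens n r * g r ^ (σ + 1) *
      ((σ + 3) / (σ + 1) - 2 * (vol n r * (n / r + 1) / dens n r))) r := by
  have hg := h.gpos r hr
  have hd := dens_pos n hr
  have h1 := ((vol_deriv n r).mul ((h.df r hr).pow 2)).sub ((h.dw hr).mul (h.df r hr))
  have h2 := ((vol_deriv n r).mul
    ((h.dg r hr).rpow_const (p := σ + 1) (Or.inl hg.ne'))).const_mul (2 / (σ + 1))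
  refine (h1.add h2).congr_deriv ?_
  have e : g r ^ (σ + 1) = g r ^ σ * g r := rpow_add_one hg.ne' σ
  have e2 : σ + 1 - 1 = σ := by ring
  have hσ1 : σ + 1 ≠ 0 := by linarith
  rw [e2, e]
  simp only [Pi.pow_apply]
  have := hr.ne'
  field_simp
  ring

/-- If `w` is bounded, each term of the Pohozaev functional is at most a multiple of `f` or
`g^σ`. -/
theorem poh_lim (h : Prof n σ a f g) (hσ : 1 < σ) {R C : ℝ} (hR : 0 < R)
    (hC : ∀ r, R ≤ r → dens n r * g r ≤ C) : Tendsto (poh n σ f g) atTop (nhds 0) := by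
  have hσ0 : 0 ≤ σ := by linarith
  have hg : Tendsto (fun r => g r ^ σ) atTop (nhds 0) := by
    have := (h.g_lim hσ0).rpow_const (p := σ) (Or.inr hσ0)
    rwa [zero_rpow (by linarith)] at this
  have hb : Tendsto (fun r => C * f r + C * f r + 2 / (σ + 1) * (C * g r ^ σ)) atTop
      (nhds 0) := by
    have := (((h.f_lim hσ0).const_mul C).add ((h.f_lim hσ0).const_mul C)).add
      ((hg.const_mul C).const_mul (2 / (σ + 1)))
    simpa using this
  refine squeeze_zero_norm' ?_ hb
  filter_upwards [eventually_ge_atTop R] with r hr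
  have hr0 := hR.trans_le hr
  have hfp := h.fpos r hr0.le
  have hgp := h.gpos r hr0
  have hv := vol_pos n hr0
  have hd := dens_pos n hr0
  have h1 : vol n r * f r ≤ C := (h.lt_w hr0).le.trans (hC r hr)
  have h2 : vol n r * g r ≤ C := by
    refine le_trans ?_ (hC r hr)
    have := vol_le_dens n hr0.le
    gcongr
  have e : g r ^ (σ + 1) = g r ^ σ * g r := rpow_add_one hgp.ne' σ
  have hgs := rpow_pos_of_pos hgp σ
  have h3 : vol n r * f r ^ 2 ≤ C * f r := by
    calc _ = vol n r * f r * f r := by ring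
      _ ≤ _ := by gcongr
  have h4 : dens n r * g r * f r ≤ C * f r := by have := hC r hr; gcongr
  have h5 : vol n r * g r ^ (σ + 1) ≤ C * g r ^ σ := by
    calc _ = vol n r * g r * g r ^ σ := by rw [e]; ring
      _ ≤ _ := by gcongr
  have hσ1 : 0 < 2 / (σ + 1) := by positivity
  have h6 : 2 / (σ + 1) * (vol n r * g r ^ (σ + 1)) ≤ 2 / (σ + 1) * (C * g r ^ σ) := by gcongr
  have h7 : 0 ≤ 2 / (σ + 1) * (vol n r * g r ^ (σ + 1)) := by positivity
  have h8 : 0 ≤ vol n r * f r ^ 2 := by positivity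
  have h9 : 0 ≤ dens n r * g r * f r := by positivity
  rw [Real.norm_eq_abs, abs_le, poh]
  constructor <;> linarith

/-- Along a fast decaying profile the Pohozaev functional is positive: it vanishes at both ends,
and it first increases, then decreases. -/
theorem poh_pos (h : Prof n σ a f g) (hn : 1 ≤ n) (hσ : 1 < σ) {R C : ℝ} (hR : 0 < R)
    (hC : ∀ r, R ≤ r → dens n r * g r ≤ C) {r : ℝ} (hr : 0 < r) : 0 < poh n σ f g r := by
  have hmono := logDeriv_strictMono n hn
  set J : ℝ → ℝ := fun r => vol n r * (n / r + 1) / dens n r with hJ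
  have hpos : ∀ x, 0 < x → 0 < dens n x * g x ^ (σ + 1) := fun x hx =>
    mul_pos (dens_pos n hx) (rpow_pos_of_pos (h.gpos x hx) _)
  rcases le_or_gt (2 * J r) ((σ + 3) / (σ + 1)) with hc | hc
  · have := lt_of_deriv_pos hr ((h.poh_cont hσ).mono (Icc_subset_Ici_zero le_rfl))
      (fun x hx => h.poh_deriv hσ hx.1) (fun x hx => by
        have : J x < J r := hmono hx.1 hr hx.2
        exact mul_pos (hpos x hx.1) (by change 0 < _ - 2 * J x; linarith))
    rwa [h.poh_zero] at this
  · have hdec : ∀ x y, r ≤ x → x < y → poh n σ f g y < poh n σ f g x := fun x y hx hxy => by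
      have hx0 := hr.trans_le hx
      refine lt_of_deriv_neg hxy ((h.poh_cont hσ).mono (Icc_subset_Ici_zero hx0.le))
        (fun z hz => h.poh_deriv hσ (hx0.trans hz.1)) (fun z hz => ?_)
      have : J r < J z := hmono hr (hx0.trans hz.1) (hx.trans_lt hz.1)
      exact mul_neg_of_pos_of_neg (hpos z (hx0.trans hz.1))
        (by change _ - 2 * J z < 0; linarith)
    have h1 : 0 ≤ poh n σ f g (r + 1) := by
      refine le_of_tendsto (h.poh_lim hσ hR hC) ?_
      filter_upwards [eventually_gt_atTop (r + 1)] with x hx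
      exact (hdec _ _ (by linarith) hx).le
    exact h1.trans_lt (hdec r (r + 1) le_rfl (lt_add_one r))

variable {b : ℝ} {f₂ g₂ : ℝ → ℝ}

theorem ratio_deriv (h : Prof n σ a f g) (h₂ : Prof n σ b f₂ g₂) {r : ℝ} (hr : 0 < r) :
    HasDerivAt (fun x => g₂ x / g x) ((f₂ r * g r - g₂ r * f r) / g r ^ 2) r :=
  ((h₂.dg r hr).div (h.dg r hr) (h.gpos r hr).ne').congr_deriv (by ring)

theorem wronskian_deriv (h : Prof n σ a f g) (h₂ : Prof n σ b f₂ g₂) {r : ℝ} (hr : 0 < r) :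
    HasDerivAt (fun x => dens n x * (f₂ x * g x - g₂ x * f x))
      (dens n r * (g₂ r * g r ^ σ - g r * g₂ r ^ σ)) r :=
  ((dens_deriv n hr).mul (((h₂.df r hr).mul (h.dg r hr)).sub
    ((h₂.dg r hr).mul (h.df r hr)))).congr_deriv (by simp only [Pi.mul_apply, Pi.sub_apply]; ring)

theorem wronskian_deriv_neg {x y σ : ℝ} (hσ : 1 < σ) (hx : 0 < x) (hxy : x < y) :
    y * x ^ σ - x * y ^ σ < 0 := by
  have hy := hx.trans hxy
  have h1 : x ^ (σ - 1) < y ^ (σ - 1) := rpow_lt_rpow hx.le hxy (by linarith)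
  have e : ∀ z : ℝ, 0 < z → z ^ σ = z ^ (σ - 1) * z := fun z hz => by
    rw [← rpow_add_one hz.ne']; ring_nf
  rw [e x hx, e y hy]
  have : 0 < x * y := mul_pos hx hy
  nlinarith

/-- The combination `(w₂/w₁)^{σ+1} P₁ - P₂` of the Pohozaev functionals of two profiles. -/
noncomputable def cross (n : ℕ) (σ : ℝ) (f g f₂ g₂ : ℝ → ℝ) (r : ℝ) : ℝ :=
  (g₂ r / g r) ^ (σ + 1) * poh n σ f g r - poh n σ f₂ g₂ r

theorem cross_deriv (h : Prof n σ a f g) (h₂ : Prof n σ b f₂ g₂) (hσ : 1 < σ) {r : ℝ}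
    (hr : 0 < r) :
    HasDerivAt (cross n σ f g f₂ g₂) ((σ + 1) * (g₂ r / g r) ^ σ * poh n σ f g r *
      ((f₂ r * g r - g₂ r * f r) / g r ^ 2)) r := by
  have hg := h.gpos r hr
  have hg₂ := h₂.gpos r hr
  have hq : 0 < g₂ r / g r := div_pos hg₂ hg
  have h1 := (h.ratio_deriv h₂ hr).rpow_const (p := σ + 1) (Or.inl hq.ne')
  refine ((h1.mul (h.poh_deriv hσ hr)).sub (h₂.poh_deriv hσ hr)).congr_deriv ?_
  have e2 : σ + 1 - 1 = σ := by ring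
  have e3 : (g₂ r / g r) ^ (σ + 1) * g r ^ (σ + 1) = g₂ r ^ (σ + 1) := by
    rw [← mul_rpow hq.le hg.le, div_mul_cancel₀ _ hg.ne']
  rw [e2, ← e3]
  ring

/-- `cross` decreases as long as `w₂ / w₁` does. -/
theorem cross_lt (h : Prof n σ a f g) (h₂ : Prof n σ b f₂ g₂) (hσ : 1 < σ) {x y : ℝ}
    (hx : 0 < x) (hxy : x < y) (hP : ∀ r, 0 < r → 0 < poh n σ f g r)
    (hV : ∀ r ∈ Ioo x y, f₂ r * g r - g₂ r * f r < 0) :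
    cross n σ f g f₂ g₂ y < cross n σ f g f₂ g₂ x := by
  refine lt_of_deriv_neg hxy
    (fun z hz => (h.cross_deriv h₂ hσ (hx.trans_le hz.1)).continuousAt.continuousWithinAt)
    (fun z hz => h.cross_deriv h₂ hσ (hx.trans hz.1)) (fun z hz => ?_)
  have hz0 := hx.trans hz.1
  have hg := h.gpos z hz0
  have hq := rpow_pos_of_pos (div_pos (h₂.gpos z hz0) hg) σ
  have := hP z hz0
  exact mul_neg_of_pos_of_neg (by positivity) (div_neg_of_neg_of_pos (hV z hz) (by positivity))

/-- `cross` starts from nonpositive values at the origin, so it stays nonpositive as long as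
`w₂ / w₁` decreases. -/
theorem cross_nonpos (h : Prof n σ a f g) (h₂ : Prof n σ b f₂ g₂) (hσ : 1 < σ) {r : ℝ}
    (hr : 0 < r) (hP : ∀ r, 0 < r → 0 < poh n σ f g r) (hP₂ : ∀ r, 0 < r → 0 < poh n σ f₂ g₂ r)
    (hV : ∀ x ∈ Ioo 0 r, f₂ x * g x - g₂ x * f x < 0) : cross n σ f g f₂ g₂ r ≤ 0 := by
  have hf1 := h.fpos 1 zero_le_one
  have hb := h₂.a_pos
  have hlim : Tendsto (fun x => (b / f 1) ^ (σ + 1) * poh n σ f g x) (nhdsWithin 0 (Ioi 0))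
      (nhds 0) := by
    have h1 : Tendsto (poh n σ f g) (nhdsWithin 0 (Ioi 0)) (nhds (poh n σ f g 0)) :=
      ((h.poh_cont hσ) 0 self_mem_Ici).mono_left (nhdsWithin_mono _ Ioi_subset_Ici_self)
    rw [h.poh_zero] at h1
    simpa using h1.const_mul ((b / f 1) ^ (σ + 1))
  refine ge_of_tendsto hlim ?_
  filter_upwards [Ioo_mem_nhdsGT (lt_min hr one_pos)] with x hx
  have hx0 := hx.1
  have hxr := hx.2.trans_le (min_le_left _ _)
  have hx1 := hx.2.trans_le (min_le_right _ _)
  refine (h.cross_lt h₂ hσ hx0 hxr hP fun y hy => hV y ⟨hx0.trans hy.1, hy.2⟩).le.trans ?_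
  have hg := h.gpos x hx0
  have hPx := hP x hx0
  -- near the origin `w₂ ≤ b s` and `w₁ ≥ f(1) s`
  have hq : g₂ x / g x ≤ b / f 1 := by
    rw [div_le_div_iff₀ hg hf1]
    have e1 := h₂.w_le hx0.le
    have e2 := (h.lt_w hx0).le
    have e3 := h.anti hx0.le hx1.le
    have hd := dens_pos n hx0
    have hv := vol_pos n hx0
    have : dens n x * (g₂ x * f 1) ≤ dens n x * (b * g x) := by
      calc _ = dens n x * g₂ x * f 1 := by ring
        _ ≤ b * vol n x * f x := by gcongr
        _ = b * (vol n x * f x) := by ring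
        _ ≤ b * (dens n x * g x) := by gcongr
        _ = _ := by ring
    exact le_of_mul_le_mul_left this hd
  have hq2 := rpow_le_rpow (div_pos (h₂.gpos x hx0) hg).le hq (z := σ + 1) (by linarith)
  have := hP₂ x hx0
  unfold cross
  nlinarith

/-- Two profiles `f(0) = a < b = f₂(0)` cannot both decay fast.  The Wronskian `ρ (f₂ g - g₂ f)` is
negative near the origin.  It cannot vanish first at a point where `g ≤ g₂`, where it is still
decreasing, nor at a point where `g₂ < g`, where `cross` would be positive.  So `w₂ / w₁` decreases
for ever and `cross` is negative and decreasing, but its limit is at least `-lim P₂ = 0`. -/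
theorem not_initial_lt (h : Prof n σ a f g) (h₂ : Prof n σ b f₂ g₂) (hn : 1 ≤ n) (hσ : 1 < σ)
    (hw : ∃ R C, 0 < R ∧ ∀ r, R ≤ r → dens n r * g r ≤ C)
    (hw₂ : ∃ R C, 0 < R ∧ ∀ r, R ≤ r → dens n r * g₂ r ≤ C) : ¬ a < b := by
  intro hab
  obtain ⟨R, C, hR, hC⟩ := hw
  obtain ⟨R₂, C₂, hR₂, hC₂⟩ := hw₂
  have hP : ∀ r, 0 < r → 0 < poh n σ f g r := fun r hr => h.poh_pos hn hσ hR hC hr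
  have hP₂ : ∀ r, 0 < r → 0 < poh n σ f₂ g₂ r := fun r hr => h₂.poh_pos hn hσ hR₂ hC₂ hr
  set W : ℝ → ℝ := fun x => dens n x * (f₂ x * g x - g₂ x * f x) with hW
  have hWc : ContinuousOn W (Ici 0) := (dens_cont n).continuousOn.mul
    ((h₂.contf.mul h.contg).sub (h₂.contg.mul h.contf))
  have hW0 : W 0 = 0 := by simp [hW, h.g0, h₂.g0]
  -- as long as `g₁ < g₂`, the Wronskian decreases from `0`
  have hWlt : ∀ r, 0 < r → (∀ x ∈ Ioo 0 r, g x < g₂ x) → W r < 0 := fun r hr hx => by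
    rw [← hW0]
    exact lt_of_deriv_neg hr (hWc.mono (Icc_subset_Ici_zero le_rfl))
      (fun x hx => h.wronskian_deriv h₂ hx.1)
      (fun x hxr => mul_neg_of_pos_of_neg (dens_pos n hxr.1)
        (wronskian_deriv_neg hσ (h.gpos x hxr.1) (hx x hxr)))
  have hVW : ∀ x, 0 < x → W x < 0 → f₂ x * g x - g₂ x * f x < 0 := fun x hx hWx => by
    by_contra! hcon
    exact absurd (mul_nonneg (dens_pos n hx).le hcon) (not_le.2 hWx)
  obtain ⟨ε, hε, hfε⟩ : ∃ ε, 0 < ε ∧ ∀ x ∈ Ioo 0 ε, f x < f₂ x := by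
    have h1 : ∀ᶠ x in nhdsWithin (0:ℝ) (Ioi 0), f x < f₂ x := by
      have hf := (h.contf 0 self_mem_Ici).mono_left
        (nhdsWithin_mono (0:ℝ) Ioi_subset_Ici_self)
      have hf₂ := (h₂.contf 0 self_mem_Ici).mono_left
        (nhdsWithin_mono (0:ℝ) Ioi_subset_Ici_self)
      exact hf.eventually_lt hf₂ (by rw [h.f0, h₂.f0]; exact hab)
    obtain ⟨u, hu, hsub⟩ := mem_nhdsGT_iff_exists_Ioo_subset.1 h1
    exact ⟨u, hu, hsub⟩
  have hgε : ∀ x ∈ Ioo 0 ε, g x < g₂ x := fun x hx => by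
    have h1 := lt_of_deriv_pos (u := fun x => dens n x * g₂ x - dens n x * g x) hx.1
      ((h₂.contw.mono (Icc_subset_Ici_zero le_rfl)).sub (h.contw.mono (Icc_subset_Ici_zero le_rfl)))
      (fun y hy => (h₂.dw hy.1).sub (h.dw hy.1)) (fun y hy => by
        rw [← mul_sub]
        exact mul_pos (dens_pos n hy.1) (sub_pos.2 (hfε y ⟨hy.1, hy.2.trans hx.2⟩)))
    simp only [h.g0, h₂.g0] at h1
    have hd := dens_pos n hx.1
    have h2 : dens n x * g x < dens n x * g₂ x := by linarith
    exact lt_of_mul_lt_mul_left h2 hd.le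
  have hWε : ∀ x, 0 < x → x ≤ ε → W x < 0 := fun x hx hxε =>
    hWlt x hx fun y hy => hgε y ⟨hy.1, hy.2.trans_le hxε⟩
  have hneg : ∀ r, 0 < r → W r < 0 := by
    intro r hr
    by_contra! hcon
    have hεr : ε ≤ r := by
      by_contra! h1
      exact absurd (hWε r hr h1.le) (not_lt.2 hcon)
    have hcI : ContinuousOn W (Icc ε r) := hWc.mono (Icc_subset_Ici_zero hε.le)
    have hne : (Icc ε r ∩ W ⁻¹' {0}).Nonempty := by
      obtain ⟨x, hx, hx0⟩ := intermediate_value_Icc hεr hcI ⟨(hWε ε hε le_rfl).le, hcon⟩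
      exact ⟨x, hx, hx0⟩
    have hcomp : IsCompact (Icc ε r ∩ W ⁻¹' {0}) :=
      isCompact_Icc.of_isClosed_subset
        (hcI.preimage_isClosed_of_isClosed isClosed_Icc isClosed_singleton) inter_subset_left
    -- `r₁` is the first zero of the Wronskian
    obtain ⟨r₁, ⟨hr₁, hWr₁⟩, hleast⟩ := hcomp.exists_isLeast hne
    have hWr₁ : W r₁ = 0 := hWr₁
    have hr₁0 : 0 < r₁ := hε.trans_le hr₁.1
    have hbefore : ∀ x ∈ Ioo 0 r₁, W x < 0 := by
      intro x hx
      rcases le_or_gt x ε with hxε | hxε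
      · exact hWε x hx.1 hxε
      · by_contra! hx2
        obtain ⟨y, hy, hy0⟩ := intermediate_value_Icc hxε.le (hWc.mono (Icc_subset_Ici_zero hε.le))
          ⟨(hWε ε hε le_rfl).le, hx2⟩
        have := hleast ⟨⟨hy.1, hy.2.trans (hx.2.le.trans hr₁.2)⟩, hy0⟩
        linarith [hy.2, hx.2]
    have hVb : ∀ x ∈ Ioo 0 r₁, f₂ x * g x - g₂ x * f x < 0 := fun x hx =>
      hVW x hx.1 (hbefore x hx)
    have hd := dens_pos n hr₁0
    have hg := h.gpos r₁ hr₁0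
    have hg₂ := h₂.gpos r₁ hr₁0
    rcases le_or_gt (g r₁) (g₂ r₁) with hc | hc
    · refine absurd (hWlt r₁ hr₁0 fun x hx => ?_) (by rw [hWr₁]; exact lt_irrefl 0)
      have h1 := lt_of_deriv_neg hx.2
        (fun z hz => (h.ratio_deriv h₂ (hx.1.trans_le hz.1)).continuousAt.continuousWithinAt)
        (fun z hz => h.ratio_deriv h₂ (hx.1.trans hz.1)) (fun z hz =>
          div_neg_of_neg_of_pos (hVb z ⟨hx.1.trans hz.1, hz.2⟩)
            (pow_pos (h.gpos z (hx.1.trans hz.1)) 2))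
      have h2 : 1 ≤ g₂ r₁ / g r₁ := (one_le_div hg).2 hc
      exact (one_lt_div (h.gpos x hx.1)).1 (h2.trans_lt h1)
    · have h1 := h.cross_nonpos h₂ hσ hr₁0 hP hP₂ hVb
      have hV0 : f₂ r₁ * g r₁ - g₂ r₁ * f r₁ = 0 := by
        rcases mul_eq_zero.1 hWr₁ with h2 | h2
        · exact absurd h2 hd.ne'
        · exact h2
      -- at a zero of the Wronskian, `cross = (q^{σ+1} - q²) f (s f - w)` with `q = w₂ / w₁ < 1`
      set q := g₂ r₁ / g r₁ with hq
      have hq0 : 0 < q := div_pos hg₂ hg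
      have hq1 : q < 1 := (div_lt_one hg).2 hc
      have eg : g₂ r₁ = q * g r₁ := by rw [hq]; field_simp
      have ef : f₂ r₁ = q * f r₁ := by
        rw [hq]; field_simp; linarith
      have h3 : cross n σ f g f₂ g₂ r₁
          = (q ^ 2 - q ^ (σ + 1)) * (f r₁ * (dens n r₁ * g r₁ - vol n r₁ * f r₁)) := by
        unfold cross poh
        rw [← hq, eg, ef, mul_rpow hq0.le hg.le]
        ring
      have h4 : q ^ (σ + 1) < q ^ 2 := by
        rw [← rpow_natCast]
        exact rpow_lt_rpow_of_exponent_gt hq0 hq1 (by push_cast; linarith)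
      have h5 := h.lt_w hr₁0
      have h6 : 0 < (q ^ 2 - q ^ (σ + 1)) * (f r₁ * (dens n r₁ * g r₁ - vol n r₁ * f r₁)) :=
        mul_pos (by linarith) (mul_pos (h.fpos _ hr₁0.le) (by linarith))
      linarith
  have hV : ∀ x, 0 < x → f₂ x * g x - g₂ x * f x < 0 := fun x hx => hVW x hx (hneg x hx)
  have h1 := h.cross_nonpos h₂ hσ one_pos hP hP₂ fun x hx => hV x hx.1
  have h2 := h.cross_lt h₂ hσ one_pos one_lt_two hP fun x hx => hV x (one_pos.trans hx.1)
  have h3 : 0 ≤ cross n σ f g f₂ g₂ 2 := by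
    have hlim := (h₂.poh_lim hσ hR₂ hC₂).neg
    rw [neg_zero] at hlim
    refine le_of_tendsto hlim ?_
    filter_upwards [eventually_gt_atTop 2] with x hx
    have hx0 : 0 < x := two_pos.trans hx
    refine le_trans ?_ (h.cross_lt h₂ hσ two_pos hx hP fun y hy => hV y (two_pos.trans hy.1)).le
    have := mul_pos (rpow_pos_of_pos (div_pos (h₂.gpos x hx0) (h.gpos x hx0)) (σ + 1)) (hP x hx0)
    unfold cross
    linarith
  linarith

end Prof

/-! ### Shooting, and passage between the equation and the system -/

theorem rpow_abs_eq_abs_gFun {p : ℝ} (hp : 1 < p) (f' : ℝ → ℝ) (r : ℝ) :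
    |f' r| ^ (p - 1) = |gFun p f' r| := by
  unfold gFun
  rw [abs_neg, abs_mul, abs_of_nonneg (rpow_nonneg (abs_nonneg _) _)]
  by_cases h : f' r = 0
  · rw [h, abs_zero, mul_zero, zero_rpow (by linarith)]
  · have h1 : 0 < |f' r| := abs_pos.2 h
    nth_rewrite 3 [← rpow_one |f' r|]
    rw [← rpow_add h1]
    ring_nf

/-- A positive solution of the profile equation is decreasing, and therefore gives a positive
profile in the sense of `Prof`. -/
theorem prof_of_sol {n : ℕ} {p σ a : ℝ} {f f' F' : ℝ → ℝ} (hp : 1 < p) (hσ : (p - 1) * σ = 1)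
    (h : IsProfileSol (n + 1) p a f f' F') (hpos : ∀ r, 0 ≤ r → 0 < f r) :
    Prof n σ a f (gFun p f') := by
  obtain ⟨hdf, -, hdF, -, hode, hf0, hf'0⟩ := h
  set g := gFun p f' with hg
  have hg0 : g 0 = 0 := by simp [hg, gFun, hf'0]
  have hgF : ∀ r ∈ Ici (0:ℝ), HasDerivWithinAt g (-F' r) (Ici 0) r := fun r hr => (hdF r hr).neg
  have hgc : ContinuousOn g (Ici 0) := fun r hr => (hgF r hr).continuousWithinAt
  have hfc : ContinuousOn f (Ici 0) := fun r hr => (hdf r hr).continuousWithinAt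
  have hdg : ∀ r, 0 < r → HasDerivAt g (f r - n / r * g r - |g r|) r := by
    intro r hr
    refine ((hgF r hr.le).hasDerivAt (Ici_mem_nhds hr)).congr_deriv ?_
    have h1 := hode r hr
    rw [rpow_abs_eq_abs_gFun hp] at h1
    push_cast at h1
    have h2 : |f' r| ^ (p - 2) * f' r = - g r := by rw [hg]; unfold gFun; ring
    rw [h2] at h1
    rw [add_sub_cancel_right] at h1
    linarith
  -- `(r^n e^{-r} g)' = r^n e^{-r} (f - |g| - g)` is positive wherever `g ≤ 0`
  have hdy : ∀ r, 0 < r → HasDerivAt (fun x => x ^ n * exp (-x) * g x)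
      (r ^ n * exp (-r) * (f r - |g r| - g r)) r := by
    intro r hr
    have h1 : HasDerivAt (fun x : ℝ => exp (-x)) (-exp (-r)) r := by
      simpa using (hasDerivAt_neg r).exp
    refine (((hasDerivAt_pow n r).mul h1).mul (hdg r hr)).congr_deriv ?_
    rcases n with _ | n
    · simp; ring
    · have : r ≠ 0 := hr.ne'
      simp only [Nat.add_sub_cancel, Pi.mul_apply]
      field_simp
      ring
  have hyc : ContinuousOn (fun x => x ^ n * exp (-x) * g x) (Ici 0) :=
    ContinuousOn.mul (by fun_prop) hgc
  have hgnn : ∀ r, 0 < r → 0 ≤ g r := by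
    intro r hr
    by_contra! hneg
    have hK : IsCompact {x ∈ Icc 0 r | 0 ≤ x ^ n * exp (-x) * g x} :=
      isCompact_Icc.of_isClosed_subset ((hyc.mono Icc_subset_Ici_self).preimage_isClosed_of_isClosed
        isClosed_Icc isClosed_Ici) inter_subset_left
    obtain ⟨z, ⟨hz, hz0⟩, hzmax⟩ := hK.exists_isGreatest ⟨0, ⟨le_rfl, hr.le⟩, by simp [hg0]⟩
    have hyr : r ^ n * exp (-r) * g r < 0 := mul_neg_of_pos_of_neg (by positivity) hneg
    have hzr : z < r := lt_of_le_of_ne hz.2 fun e => by rw [e] at hz0; linarith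
    have h1 := lt_of_deriv_pos hzr
      (hyc.mono (Icc_subset_Ici_self.trans (Ici_subset_Ici.2 hz.1)))
      (fun x hx => hdy x (hz.1.trans_lt hx.1)) (fun x hx => by
        have hx0 : 0 < x := hz.1.trans_lt hx.1
        have hgx : g x ≤ 0 := by
          by_contra! hgx
          exact absurd (hzmax ⟨⟨hx0.le, hx.2.le⟩, by positivity⟩) (not_le.2 hx.1)
        have := hpos x hx0.le
        rw [abs_of_nonpos hgx]
        have : 0 < x ^ n * exp (-x) := by positivity
        nlinarith)
    linarith
  have hdg' : ∀ r, 0 < r → HasDerivAt g (f r - (n / r + 1) * g r) r := fun r hr =>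
    (hdg r hr).congr_deriv (by rw [abs_of_nonneg (hgnn r hr)]; ring)
  have hgpos : ∀ r, 0 < r → 0 < g r := by
    intro r hr
    have h1 := lt_of_deriv_pos (u := fun x => dens n x * g x) hr
      ((dens_cont n).continuousOn.mul (hgc.mono Icc_subset_Ici_self))
      (fun x hx => ((dens_deriv n hx.1).mul (hdg' x hx.1)))
      (fun x hx => by
        have := mul_pos (dens_pos n hx.1) (hpos x hx.1.le)
        linarith)
    simp only [hg0, mul_zero] at h1
    exact pos_of_mul_pos_right h1 (dens_pos n hr).le
  refine ⟨hfc, hgc, hf0, hg0, fun r hr => ?_, hdg', hpos, hgpos⟩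
  refine ((hdf r hr.le).hasDerivAt (Ici_mem_nhds hr)).congr_deriv ?_
  have h1 := rpow_abs_eq_abs_gFun hp f' r
  rw [← hg, abs_of_pos (hgpos r hr)] at h1
  have h2 : f' r < 0 := by
    by_contra! hn
    have h3 := hgpos r hr
    have h4 : g r = -(|f' r| ^ (p - 2) * f' r) := rfl
    have := rpow_nonneg (abs_nonneg (f' r)) (p - 2)
    nlinarith
  rw [← h1, ← rpow_mul (abs_nonneg _), hσ, rpow_one, abs_of_neg h2, neg_neg]

/-- A solution of the truncated system that is a positive profile solves the profile equation. -/
theorem sol_of_tprof {n : ℕ} {p σ M a : ℝ} {f g : ℝ → ℝ} (hp : 1 < p) (hσ : (p - 1) * σ = 1)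
    (ht : TProf n σ M a f g) (h : Prof n σ a f g) :
    ∃ f' F', IsProfileSol (n + 1) p a f f' F' := by
  obtain ⟨I, hI, hI0, hgI⟩ := ht.gI
  have hσ0 : 0 < σ := by
    by_contra! hn
    nlinarith
  have hg : ∀ r, 0 ≤ r → 0 ≤ g r := fun r hr => by
    rcases hr.eq_or_lt with rfl | hr
    · exact h.g0.ge
    · exact (h.gpos r hr).le
  have hf'c : Continuous fun r => -(g r ^ σ) :=
    (ht.contg.rpow_const fun _ => Or.inr hσ0.le).neg
  have hF : ∀ r, 0 ≤ r → |-(g r ^ σ)| ^ (p - 2) * -(g r ^ σ) = -g r := by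
    intro r hr
    rcases hr.eq_or_lt with rfl | hr
    · rw [h.g0, zero_rpow hσ0.ne']; simp
    · have h1 := h.gpos r hr
      have h2 := rpow_pos_of_pos h1 σ
      rw [abs_neg, abs_of_pos h2, ← rpow_mul h1.le, mul_neg, ← rpow_add h1,
        show σ * (p - 2) + σ = 1 by linarith, rpow_one]
  refine ⟨fun r => -(g r ^ σ), fun r => (n + r) * I r - f r, ?_, hf'c.continuousOn, ?_,
    (((continuous_const.add continuous_id).mul hI).sub ht.contf).continuousOn, ?_, h.f0, ?_⟩
  · intro r hr
    rcases (mem_Ici.1 hr).eq_or_lt with rfl | hr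
    · refine hasDerivWithinAt_Ici_of_tendsto_deriv (s := Ioi 0)
        (fun x hx => (h.df x hx).differentiableAt.differentiableWithinAt)
        ht.contf.continuousWithinAt self_mem_nhdsWithin ?_
      refine Tendsto.congr' ?_ (hf'c.continuousAt.tendsto.mono_left nhdsWithin_le_nhds)
      filter_upwards [self_mem_nhdsWithin] with x hx
      exact (h.df x hx).deriv.symm
    · exact (h.df r hr).hasDerivWithinAt
  · intro r hr
    have key : HasDerivWithinAt (fun s => -g s) ((n + r) * I r - f r) (Ici 0) r := by
      rcases (mem_Ici.1 hr).eq_or_lt with rfl | hr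
      · refine HasDerivAt.hasDerivWithinAt ?_
        have h1 : HasDerivAt g (I 0) 0 := by
          rw [hasDerivAt_iff_tendsto_slope]
          refine Tendsto.congr' ?_ (hI.continuousAt.tendsto.mono_left nhdsWithin_le_nhds)
          filter_upwards [self_mem_nhdsWithin] with x hx
          have hx : x ≠ 0 := hx
          rw [slope_def_field, hgI x, h.g0]
          field_simp
          simp
        refine h1.neg.congr_deriv ?_
        rw [hI0, h.f0]
        have : (n:ℝ) + 1 ≠ 0 := by positivity
        field_simp
        ring
      · refine ((h.dg r hr).neg.congr_deriv ?_).hasDerivWithinAt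
        have := hr.ne'
        rw [hgI r]
        field_simp
        ring
    exact key.congr (fun x hx => hF x hx) (hF r hr)
  · intro r hr
    have h1 := h.gpos r hr
    have h2 := rpow_pos_of_pos h1 σ
    have h3 := hr.ne'
    simp only []
    rw [hF r hr.le, abs_neg, abs_of_pos h2, ← rpow_mul h1.le, show σ * (p - 1) = 1 by linarith,
      rpow_one, hgI r]
    push_cast
    field_simp
    ring
  · simp [h.g0, zero_rpow hσ0.ne']

/-- The weight of the asymptotics is a power of `ρ`. -/
theorem weight_eq (n : ℕ) (p : ℝ) {r : ℝ} (hr : 0 < r) (x : ℝ) :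
    x * r ^ ((((n + 1 : ℕ) : ℝ) - 1) / (p - 1)) * exp (r / (p - 1)) =
      x * dens n r ^ (1 / (p - 1)) := by
  unfold dens
  rw [mul_rpow (by positivity) (exp_pos r).le, ← rpow_natCast, ← rpow_mul hr.le, ← exp_mul,
    mul_assoc]
  push_cast
  congr 3
  · ring
  · ring

theorem tendsto_weight_iff (n : ℕ) (p : ℝ) (f : ℝ → ℝ) (c : ℝ) :
    Tendsto (fun r => f r * r ^ ((((n + 1 : ℕ) : ℝ) - 1) / (p - 1)) * exp (r / (p - 1)))
      atTop (nhds c) ↔ Tendsto (fun r => f r * dens n r ^ (1 / (p - 1))) atTop (nhds c) :=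
  tendsto_congr' ((eventually_gt_atTop 0).mono fun r hr => weight_eq n p hr (f r))

/-- The shooting argument: the initial values whose truncated solution becomes negative form an
open set containing all large values, those whose solution enters the slow set form a disjoint open
set containing all small values, and any value in neither set has a fast decaying profile. -/
theorem exists_fast (n : ℕ) {σ : ℝ} (hσ : 1 < σ) (hσn : n * σ < n + 2) :
    ∃ M a f g, 0 < a ∧ TProf n σ M a f g ∧ Prof n σ a f g ∧
      ∃ c, 0 < c ∧ Tendsto (fun r => f r * dens n r ^ σ) atTop (nhds c) := by
  obtain ⟨A, hA⟩ := Prof.not_of_large n hσ hσn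
  have hκ : 0 < (σ - 1) / (2 * σ) := div_pos (by linarith) (by linarith)
  set δ := ((σ - 1) / (2 * σ)) ^ (1 / (σ - 1)) with hδdef
  have hδ : 0 < δ := rpow_pos_of_pos hκ _
  have hδσ : δ ^ (σ - 1) = (σ - 1) / (2 * σ) := by
    rw [hδdef, ← rpow_mul hκ.le, one_div, inv_mul_cancel₀ (by linarith), rpow_one]
  have hδ2 : δ ^ (σ - 1) ≤ 1 / 2 := by
    rw [hδσ, div_le_div_iff₀ (by linarith) two_pos]
    linarith
  set M := max A δ
  have hM : δ / 2 ≤ M := (half_le_self hδ.le).trans (le_max_right _ _)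
  have hM0 : 0 < M := (half_pos hδ).trans_le hM
  obtain ⟨f, g, ht, hc⟩ := tprof_exists n hσ hM0.le
  set U : Set ℝ := ⋃ r ∈ Ioi (0:ℝ), {a | f a r < 0} with hU
  set V : Set ℝ := ⋃ r ∈ Ioi (0:ℝ),
    {a | 0 < f a r ∧ f a r < δ ∧ g a r < δ ∧ g a r ^ σ < f a r} with hV
  have hUo : IsOpen U := isOpen_biUnion fun r hr =>
    isOpen_lt (hc r (le_of_lt hr)).1 continuous_const
  have hVo : IsOpen V := isOpen_biUnion fun r hr => by
    obtain ⟨h1, h2⟩ := hc r (le_of_lt hr)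
    exact (isOpen_lt continuous_const h1).inter ((isOpen_lt h1 continuous_const).inter
      ((isOpen_lt h2 continuous_const).inter
        (isOpen_lt (h2.rpow_const fun _ => Or.inr (by linarith)) h1)))
  have hVpos : ∀ a ∈ Icc (δ / 2) M, a ∈ V → ∀ r, 0 < r → 0 < f a r := by
    intro a ha haV
    obtain ⟨r₀, hr₀, h1, h2, h3, h4⟩ := mem_iUnion₂.1 haV
    exact (ht a).pos_of_mem_slow ((half_pos hδ).trans_le ha.1) ha.2 hσ hδ hδσ hr₀ h1 h2 h3 h4
  have hMU : M ∈ U := by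
    by_contra hn
    refine hA M (le_max_left _ _) (f M) (g M) ((ht M).prof hM0 le_rfl fun r hr => ?_)
    by_contra! hneg
    exact hn (mem_iUnion₂.2 ⟨r, hr, hneg⟩)
  have hδV : δ / 2 ∈ V := by
    have h1 := (ht (δ / 2)).contf.tendsto 0
    have h2 := (ht (δ / 2)).contg.tendsto 0
    have h3 := (((ht (δ / 2)).contg.rpow_const (p := σ) fun _ => Or.inr (by linarith)).sub
      (ht (δ / 2)).contf).tendsto 0
    simp only [(ht (δ / 2)).f0, (ht (δ / 2)).g0, Pi.sub_apply,
      zero_rpow (by linarith : σ ≠ 0)] at h1 h2 h3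
    have h4 := ((((h1.eventually_const_lt (half_pos hδ)).and
      (h1.eventually_lt_const (half_lt_self hδ))).and (h2.eventually_lt_const hδ)).and
      (h3.eventually_lt_const (by linarith [half_pos hδ] : 0 - δ / 2 < 0))).filter_mono
        (nhdsWithin_le_nhds (s := Ioi 0))
    obtain ⟨r, ⟨⟨⟨h5, h6⟩, h7⟩, h8⟩, hr⟩ := (h4.and self_mem_nhdsWithin).exists
    exact mem_iUnion₂.2 ⟨r, hr, h5, h6, h7, sub_neg.1 h8⟩
  obtain ⟨a, ha, haU, haV⟩ : ∃ a ∈ Icc (δ / 2) M, a ∉ U ∧ a ∉ V := by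
    by_contra! hcov
    obtain ⟨a, ha, haU, haV⟩ := isPreconnected_Icc (a := δ / 2) (b := M) U V hUo hVo
      (fun a ha => or_iff_not_imp_left.2 (hcov a ha)) ⟨M, ⟨hM, le_rfl⟩, hMU⟩
      ⟨δ / 2, ⟨le_rfl, hM⟩, hδV⟩
    obtain ⟨r, hr, hneg⟩ := mem_iUnion₂.1 haU
    exact lt_asymm hneg (hVpos a ha haV r hr)
  have ha0 : 0 < a := (half_pos hδ).trans_le ha.1
  have hP : Prof n σ a (f a) (g a) := (ht a).prof ha0 ha.2 fun r hr => by
    by_contra! hneg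
    exact haU (mem_iUnion₂.2 ⟨r, hr, hneg⟩)
  obtain ⟨R, C, hR, hC⟩ := hP.w_bdd_of_not_slow hσ hδ hδ2 fun r hr h1 h2 => by
    by_contra! h3
    exact haV (mem_iUnion₂.2 ⟨r, hr, hP.fpos r hr.le, h1, h2, h3⟩)
  exact ⟨M, a, f a, g a, ha0, ht a, hP, hP.fast_of_w_bdd hσ hR hC⟩

/-- there is a unique `a_* > 0` whose profile is positive on `[0,∞)` with
`f(r;a_*) r^{(N-1)/(p-1)} e^{r/(p-1)} → c_* > 0` as `r → ∞`. -/
theorem stmt1 (N : ℕ) (hN : 2 ≤ N) (p : ℝ)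
    (hp1 : 2 * (N : ℝ) / ((N : ℝ) + 1) < p) (hp2 : p < 2) :
    ∃! astar : ℝ, 0 < astar ∧ HasFastDecay N p astar := by
  obtain ⟨n, rfl⟩ : ∃ n, N = n + 1 := ⟨N - 1, by omega⟩
  have hn : 1 ≤ n := by omega
  have hn' : (1:ℝ) ≤ n := by exact_mod_cast hn
  push_cast at hp1
  rw [div_lt_iff₀ (by positivity)] at hp1
  have hp : 1 < p := by nlinarith
  have hp0 : 0 < p - 1 := by linarith
  set σ := 1 / (p - 1) with hσdef
  have hσp : (p - 1) * σ = 1 := by rw [hσdef]; field_simp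
  have hσ : 1 < σ := by rw [hσdef, lt_div_iff₀ hp0]; linarith
  have hσn : n * σ < n + 2 := by
    rw [hσdef, mul_one_div, div_lt_iff₀ hp0]
    linarith
  have bdd : ∀ a, HasFastDecay (n + 1) p a → ∃ f g, Prof n σ a f g ∧
      ∃ R C, 0 < R ∧ ∀ r, R ≤ r → dens n r * g r ≤ C := by
    rintro a ⟨f, f', F', hsol, hpos, c, -, hlim⟩
    have hP := prof_of_sol hp hσp hsol hpos
    exact ⟨f, _, hP, hP.w_bdd_of_fast hσ ((tendsto_weight_iff n p f c).1 hlim)⟩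
  obtain ⟨M, a, f, g, ha, ht, hP, c, hc, hlim⟩ := exists_fast n hσ hσn
  obtain ⟨f', F', hsol⟩ := sol_of_tprof hp hσp ht hP
  have hfast : HasFastDecay (n + 1) p a :=
    ⟨f, f', F', hsol, hP.fpos, c, hc, (tendsto_weight_iff n p f c).2 hlim⟩
  refine ⟨a, ⟨ha, hfast⟩, fun b hb => ?_⟩
  obtain ⟨f₁, g₁, h₁, hw₁⟩ := bdd a hfast
  obtain ⟨f₂, g₂, h₂, hw₂⟩ := bdd b hb.2
  exact le_antisymm (not_lt.1 (h₁.not_initial_lt h₂ hn hσ hw₁ hw₂))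
    (not_lt.1 (h₂.not_initial_lt h₁ hn hσ hw₂ hw₁))
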